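/- Let T and T' be triangulations of the same convex n-gon given in a linear representation, let Γ be their set of triangle pairs and H = H(T,T') their conflict graph. Then for every integer β ≥ 1, the flip distance between the β-blow-ups βT and βT' is at most β(2|Γ| − ac(H)) + n(2n − 5). -/

import Mathlib

/-!
The blow-ups are polygons in which every spine edge carrying a triangle pair has become a slot of
`β` new vertices, filled in `βT` by a fan from the apex of the triangle of `T`, and in `βT'` by a
fan from the apex of the triangle of `T'`. Let `S` be a largest set of pairs without a directed
cycle in the conflict graph.

* Outside `S`, the fan is collapsed onto the left end of its slot with `β` flips, in `βT` and in
  `βT'` alike (`IsTriangulation.collapse`). These pairs cost `2 β` flips each.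
* In `S`, the fan is moved directly from the old apex to the new one, with `β + 1` flips
  (`IsTriangulation.shift`). The pairs are handled in a topological order of the conflict graph:
  a source of the remaining pairs can be moved, since its new fan crosses no fan still in its old
  position, while fans that are all old or all new do not cross because they belong to a common
  triangulation.

At every moment the triangulation contains a frame: the boundary and one bundle of `β` edges for
each slot. A triangulation has at most `2 N - 3` edges (`IsTriangulation.ncard_le`), so only
`n - 3` edges lie outside the frame, whatever `β` is. Before each move, and once at the end, these
edges are rearranged with at most `2 (n - 3)` flips. This uses that two triangulations `X` and `Y`
with a common set `F` of edges are joined by `|X \ F| + |Y \ F|` flips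
(`IsTriangulation.flipPath_of_common`), through a canonical triangulation containing `F`, the
left ends of whose edges are as small as possible.

Altogether (`flipPath_core`) the path has at most
`2 β (|Γ| - |S|) + |S| (2 (n - 3) + β + 1) + 2 (n - 3)` flips, and `|S| ≤ |Γ| ≤ n - 1` because a
pair is determined by its spine edge.
-/

/-!
Triangulations of a convex polygon whose vertices are labelled `0, 1, …, n-1`
in order along the boundary (this labelling is the *linear representation*:
the vertices lie on the spine in this order, and the spine edges are the
boundary edges `{i, i+1}` for `0 ≤ i ≤ n-2`).
-/

/-- Two chords of a convex polygon cross: their endpoints interleave along the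
boundary order. -/
def Crosses (e f : Finset ℕ) : Prop :=
  ∃ a b c d : ℕ, a < b ∧ c < d ∧ e = {a, b} ∧ f = {c, d} ∧
    ((a < c ∧ c < b ∧ b < d) ∨ (c < a ∧ a < d ∧ d < b))

/-- Boundary edges of the convex polygon with vertices `0, 1, …, n-1`. -/
def BoundaryEdge (n : ℕ) (e : Finset ℕ) : Prop :=
  (∃ i : ℕ, i + 2 ≤ n ∧ e = {i, i + 1}) ∨ (2 ≤ n ∧ e = ({0, n - 1} : Finset ℕ))

/-- A chord of the convex `n`-gon: a 2-element subset of the vertex set. -/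
def IsChord (n : ℕ) (e : Finset ℕ) : Prop :=
  e.card = 2 ∧ ∀ v ∈ e, v < n

/-- A triangulation of the convex `n`-gon: all boundary edges together with an
inclusion-maximal family of pairwise non-crossing diagonals. -/
def IsTriangulation (n : ℕ) (T : Set (Finset ℕ)) : Prop :=
  (∀ e ∈ T, IsChord n e) ∧
  (∀ e : Finset ℕ, BoundaryEdge n e → e ∈ T) ∧
  (∀ e ∈ T, ∀ f ∈ T, ¬ Crosses e f) ∧
  (∀ e : Finset ℕ, IsChord n e → e ∉ T → ∃ f ∈ T, Crosses e f)

/-- `T'` is obtained from the triangulation `T` of the convex `n`-gon by a single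
flip: one diagonal `e` of `T` is replaced by another diagonal `f` so that the
result is again a triangulation. -/
def Flip (n : ℕ) (T T' : Set (Finset ℕ)) : Prop :=
  IsTriangulation n T ∧ IsTriangulation n T' ∧
  ∃ e f : Finset ℕ, e ∈ T ∧ f ∉ T ∧ T' = insert f (T \ {e})

/-- A flip sequence of length `ℓ` from `T` to `T'` in the convex `n`-gon. -/
def IsFlipSeq (n : ℕ) (T T' : Set (Finset ℕ)) (ℓ : ℕ) (g : ℕ → Set (Finset ℕ)) : Prop :=
  g 0 = T ∧ g ℓ = T' ∧ ∀ i, i < ℓ → Flip n (g i) (g (i + 1))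

/-- The flip distance between two triangulations of the convex `n`-gon:
the minimal length of a flip sequence between them. -/
noncomputable def flipDist (n : ℕ) (T T' : Set (Finset ℕ)) : ℕ :=
  sInf {ℓ : ℕ | ∃ g : ℕ → Set (Finset ℕ), IsFlipSeq n T T' ℓ g}

/-- `{x, y, z}` is a triangle of the triangulation `T` (its three chords belong to
`T`; for triangulations of a convex polygon this means it is a face). -/
def IsTriangle (T : Set (Finset ℕ)) (x y z : ℕ) : Prop :=
  x ≠ y ∧ y ≠ z ∧ x ≠ z ∧
  ({x, y} : Finset ℕ) ∈ T ∧ ({y, z} : Finset ℕ) ∈ T ∧ ({x, z} : Finset ℕ) ∈ T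

/-- `p = (a, u, u')` encodes a triangle pair of `(T, T')`: the triangle
`{a, a+1, u}` of `T` and the triangle `{a, a+1, u'}` of `T'` share the spine edge
`{a, a+1}`, and each of the two triangles has exactly one edge on the spine
(the apex is not consecutive with the spine edge). -/
def IsTrianglePair (n : ℕ) (T T' : Set (Finset ℕ)) (p : ℕ × ℕ × ℕ) : Prop :=
  p.1 + 2 ≤ n ∧ p.2.1 < n ∧ p.2.2 < n ∧
  IsTriangle T p.1 (p.1 + 1) p.2.1 ∧ IsTriangle T' p.1 (p.1 + 1) p.2.2 ∧
  p.2.1 + 1 ≠ p.1 ∧ p.2.1 ≠ p.1 + 2 ∧ p.2.2 + 1 ≠ p.1 ∧ p.2.2 ≠ p.1 + 2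

/-- The set `Γ` of triangle pairs of `(T, T')`. -/
def Gamma (n : ℕ) (T T' : Set (Finset ℕ)) : Set (ℕ × ℕ × ℕ) :=
  {p | IsTrianglePair n T T' p}

/-- The left endpoints of the spine edges that carry a triangle pair. -/
def leftSet (n : ℕ) (T T' : Set (Finset ℕ)) : Set ℕ :=
  {a : ℕ | ∃ u u' : ℕ, (a, u, u') ∈ Gamma n T T'}

/-- The embedding of the original vertices into the vertex set of the β-blow-up:
`β` new subdivision vertices are inserted inside each spine edge carrying a
triangle pair. -/
noncomputable def emb (n : ℕ) (T T' : Set (Finset ℕ)) (β : ℕ) (i : ℕ) : ℕ :=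
  i + β * ({a ∈ leftSet n T T' | a < i}).ncard

/-- Number of vertices of the blown-up polygon. -/
noncomputable def blowSize (n : ℕ) (T T' : Set (Finset ℕ)) (β : ℕ) : ℕ :=
  n + β * (Gamma n T T').ncard

/-- The set `V(Δ)` of the `β` new subdivision vertices of the spine edge of the
pair `p`, in the β-blow-up. -/
noncomputable def subVerts (n : ℕ) (T T' : Set (Finset ℕ)) (β : ℕ) (p : ℕ × ℕ × ℕ) : Set ℕ :=
  {v : ℕ | ∃ k : ℕ, 1 ≤ k ∧ k ≤ β ∧ v = emb n T T' β p.1 + k}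

/-- The fan `Λ(Δ)` of the pair `p` in the β-blow-up of `T`: the `β` edges from
the apex of `Δ` to the subdivision vertices `V(Δ)`. -/
noncomputable def fanT (n : ℕ) (T T' : Set (Finset ℕ)) (β : ℕ) (p : ℕ × ℕ × ℕ) : Set (Finset ℕ) :=
  {E | ∃ k : ℕ, 1 ≤ k ∧ k ≤ β ∧
    E = ({emb n T T' β p.2.1, emb n T T' β p.1 + k} : Finset ℕ)}

/-- The fan `Λ(Δ')` of the pair `p` in the β-blow-up of `T'`. -/
noncomputable def fanT' (n : ℕ) (T T' : Set (Finset ℕ)) (β : ℕ) (p : ℕ × ℕ × ℕ) : Set (Finset ℕ) :=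
  {E | ∃ k : ℕ, 1 ≤ k ∧ k ≤ β ∧
    E = ({emb n T T' β p.2.2, emb n T T' β p.1 + k} : Finset ℕ)}

/-- The β-blow-up `βT` of `T`: images of the edges of `T` that are not subdivided,
the subdivided boundary pieces, and the fans `Λ(Δ)`. -/
noncomputable def blowT (n : ℕ) (T T' : Set (Finset ℕ)) (β : ℕ) : Set (Finset ℕ) :=
  {E | ∃ i j : ℕ, ({i, j} : Finset ℕ) ∈ T ∧
      (¬ ∃ a ∈ leftSet n T T', ({i, j} : Finset ℕ) = {a, a + 1}) ∧
      E = ({emb n T T' β i, emb n T T' β j} : Finset ℕ)} ∪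
  {E | ∃ a ∈ leftSet n T T', ∃ k : ℕ, k ≤ β ∧
      E = ({emb n T T' β a + k, emb n T T' β a + k + 1} : Finset ℕ)} ∪
  ⋃ p ∈ Gamma n T T', fanT n T T' β p

/-- The β-blow-up `βT'` of `T'`. -/
noncomputable def blowT' (n : ℕ) (T T' : Set (Finset ℕ)) (β : ℕ) : Set (Finset ℕ) :=
  {E | ∃ i j : ℕ, ({i, j} : Finset ℕ) ∈ T' ∧
      (¬ ∃ a ∈ leftSet n T T', ({i, j} : Finset ℕ) = {a, a + 1}) ∧
      E = ({emb n T T' β i, emb n T T' β j} : Finset ℕ)} ∪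
  {E | ∃ a ∈ leftSet n T T', ∃ k : ℕ, k ≤ β ∧
      E = ({emb n T T' β a + k, emb n T T' β a + k + 1} : Finset ℕ)} ∪
  ⋃ p ∈ Gamma n T T', fanT' n T T' β p

/-- Crossing of two chords `{a,b}` and `{c,d}` of a "polygon" with vertices on the
rational line (used to express crossing of fan edges, whose subdivision endpoints
are represented by midpoints of spine edges). -/
def crossQ (a b c d : ℚ) : Prop :=
  (min a b < min c d ∧ min c d < max a b ∧ max a b < max c d) ∨
  (min c d < min a b ∧ min a b < max c d ∧ max c d < max a b)

/-- The directed edge `p → q` of the conflict graph `H(T,T')`: the fan edges of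
`Λ(Δ_p)` (from the apex of `Δ_p` to the inside of its spine edge) cross the fan
edges of `Λ(Δ'_q)`. -/
def ConflictEdge (n : ℕ) (T T' : Set (Finset ℕ)) (p q : ℕ × ℕ × ℕ) : Prop :=
  p ∈ Gamma n T T' ∧ q ∈ Gamma n T T' ∧ p ≠ q ∧
  crossQ (p.2.1 : ℚ) ((p.1 : ℚ) + 1 / 2) (q.2.2 : ℚ) ((q.1 : ℚ) + 1 / 2)

/-- `S` contains a directed cycle of the directed graph with edge relation `E`. -/
def HasDicycleIn {α : Type*} (E : α → α → Prop) (S : Set α) : Prop :=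
  ∃ (k : ℕ) (f : ℕ → α), 0 < k ∧ (∀ i, i ≤ k → f i ∈ S) ∧
    (∀ i, i < k → E (f i) (f (i + 1))) ∧ f k = f 0

/-- `ac(H)`: the maximum cardinality of a subset of `Γ` inducing no directed cycle
in the conflict graph `H(T,T')`. -/
noncomputable def acNum (n : ℕ) (T T' : Set (Finset ℕ)) : ℕ :=
  sSup {m : ℕ | ∃ S : Set (ℕ × ℕ × ℕ), S ⊆ Gamma n T T' ∧
    ¬ HasDicycleIn (ConflictEdge n T T') S ∧ S.ncard = m}

/-- `gone(Δ)` for the flip sequence `g`: the least index `t` such that `g t`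
contains no edge of the fan `Λ(Δ)`. -/
noncomputable def gone (n : ℕ) (T T' : Set (Finset ℕ)) (β : ℕ)
    (g : ℕ → Set (Finset ℕ)) (p : ℕ × ℕ × ℕ) : ℕ :=
  sInf {t : ℕ | ∀ E ∈ fanT n T T' β p, E ∉ g t}

/-- The pair `p` is *direct* with respect to the flip sequence `g`: some
triangulation `g a` with `a ≤ gone(Δ)` contains an edge of `Λ(Δ')`. -/
def DirectPair (n : ℕ) (T T' : Set (Finset ℕ)) (β : ℕ)
    (g : ℕ → Set (Finset ℕ)) (p : ℕ × ℕ × ℕ) : Prop :=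
  ∃ a : ℕ, a ≤ gone n T T' β g p ∧ ∃ E ∈ fanT' n T T' β p, E ∈ g a

/-- Reachability in the graph with vertex set `V` and edge set `Ed`. -/
def GReach (V : Set ℕ) (Ed : Set (Finset ℕ)) : ℕ → ℕ → Prop :=
  Relation.ReflTransGen (fun u v => u ∈ V ∧ v ∈ V ∧ ({u, v} : Finset ℕ) ∈ Ed)

/-- An *above* pair: both apexes lie to the left of the spine edge,
`u < u' < a < a+1`. -/
def AbovePair (p : ℕ × ℕ × ℕ) : Prop := p.2.1 < p.2.2 ∧ p.2.2 < p.1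

/-- A *below* pair: both apexes lie to the right of the spine edge,
`a < a+1 < u < u'`. -/
def BelowPair (p : ℕ × ℕ × ℕ) : Prop := p.1 + 1 < p.2.1 ∧ p.2.1 < p.2.2

/-- A *crossing* pair: `u' < a < a+1 < u`. -/
def CrossingPair (p : ℕ × ℕ × ℕ) : Prop := p.2.2 < p.1 ∧ p.1 + 1 < p.2.1

/-! ### Crossings and flips in a triangulation -/

/-- The chords `{a, b}` and `{c, d}` interleave: exactly one of `c`, `d` lies strictly between
`a` and `b`, and the other lies strictly outside. Unlike in `Crosses`, the endpoints are given
in no particular order. -/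
def Cr (a b c d : ℕ) : Prop :=
  (((a < c ∧ c < b) ∨ (b < c ∧ c < a)) ∧ ((d < a ∧ d < b) ∨ (a < d ∧ b < d))) ∨
  (((a < d ∧ d < b) ∨ (b < d ∧ d < a)) ∧ ((c < a ∧ c < b) ∨ (a < c ∧ b < c)))

theorem pair_eq_iff {a b c d : ℕ} :
    ({a, b} : Finset ℕ) = {c, d} ↔ (a = c ∧ b = d) ∨ (a = d ∧ b = c) := by
  constructor
  · intro h
    have h1 : a ∈ ({c, d} : Finset ℕ) := by rw [← h]; simp
    have h2 : b ∈ ({c, d} : Finset ℕ) := by rw [← h]; simp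
    have h3 : c ∈ ({a, b} : Finset ℕ) := by rw [h]; simp
    have h4 : d ∈ ({a, b} : Finset ℕ) := by rw [h]; simp
    simp only [Finset.mem_insert, Finset.mem_singleton] at h1 h2 h3 h4
    omega
  · rintro (⟨rfl, rfl⟩ | ⟨rfl, rfl⟩)
    · rfl
    · exact Finset.pair_comm _ _

theorem crosses_iff {a b c d : ℕ} :
    Crosses ({a, b} : Finset ℕ) {c, d} ↔ Cr a b c d := by
  constructor
  · rintro ⟨a', b', c', d', h1, h2, h3, h4, h5⟩
    rw [pair_eq_iff] at h3 h4
    unfold Cr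
    omega
  · intro h
    refine ⟨min a b, max a b, min c d, max c d, ?_, ?_, ?_, ?_, ?_⟩
    · unfold Cr at h; omega
    · unfold Cr at h; omega
    · rw [pair_eq_iff]; omega
    · rw [pair_eq_iff]; omega
    · unfold Cr at h; omega

theorem Cr.symm {a b c d : ℕ} (h : Cr a b c d) : Cr c d a b := by
  unfold Cr at *; grind

theorem Cr.comm {a b c d : ℕ} : Cr a b c d ↔ Cr c d a b := ⟨Cr.symm, Cr.symm⟩

theorem Cr.swap {a b c d : ℕ} (h : Cr a b c d) : Cr a b d c := by
  unfold Cr at *; grind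

theorem Cr.ne {a b c d : ℕ} (h : Cr a b c d) :
    a ≠ b ∧ a ≠ c ∧ a ≠ d ∧ b ≠ c ∧ b ≠ d ∧ c ≠ d := by
  unfold Cr at *; grind

/-- A chord that crosses the side `{p, q}` of the triangle `p q r` but neither of the two other
sides ends at `r`. -/
theorem Cr.tri {p q r c d : ℕ} (h : Cr p q c d) (h1 : ¬ Cr c d r p) (h2 : ¬ Cr c d r q) :
    c = r ∨ d = r := by
  unfold Cr at *; grind

theorem isChord_pair {n a b : ℕ} : IsChord n {a, b} ↔ a ≠ b ∧ a < n ∧ b < n := by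
  unfold IsChord
  simp only [Finset.mem_insert, Finset.mem_singleton, forall_eq_or_imp, forall_eq]
  constructor
  · rintro ⟨h, h1, h2⟩
    refine ⟨?_, h1, h2⟩
    rintro rfl
    simp at h
  · rintro ⟨h, h1, h2⟩
    exact ⟨Finset.card_pair h, h1, h2⟩

theorem IsChord.exists_pair {n : ℕ} {e : Finset ℕ} (h : IsChord n e) :
    ∃ a b, a < b ∧ b < n ∧ e = {a, b} := by
  obtain ⟨a, b, hab, rfl⟩ := Finset.card_eq_two.1 h.1
  rw [isChord_pair] at h
  rcases lt_or_gt_of_ne hab with h1 | h1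
  · exact ⟨a, b, h1, h.2.2, rfl⟩
  · exact ⟨b, a, h1, h.2.1, Finset.pair_comm _ _⟩

namespace IsTriangulation

variable {N : ℕ} {T : Set (Finset ℕ)}

theorem chord (h : IsTriangulation N T) {a b : ℕ} (hab : ({a, b} : Finset ℕ) ∈ T) :
    a ≠ b ∧ a < N ∧ b < N := isChord_pair.1 (h.1 _ hab)

theorem side (h : IsTriangulation N T) {i : ℕ} (hi : i + 2 ≤ N) :
    ({i, i + 1} : Finset ℕ) ∈ T := h.2.1 _ (Or.inl ⟨i, hi, rfl⟩)

theorem base (h : IsTriangulation N T) (hN : 2 ≤ N) :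
    ({0, N - 1} : Finset ℕ) ∈ T := h.2.1 _ (Or.inr ⟨hN, rfl⟩)

theorem not_cr (h : IsTriangulation N T) {a b c d : ℕ} (hab : ({a, b} : Finset ℕ) ∈ T)
    (hcd : ({c, d} : Finset ℕ) ∈ T) : ¬ Cr a b c d :=
  fun hc => h.2.2.1 _ hab _ hcd (crosses_iff.2 hc)

theorem exists_cr (h : IsTriangulation N T) {a b : ℕ} (hab : a ≠ b) (ha : a < N) (hb : b < N)
    (hn : ({a, b} : Finset ℕ) ∉ T) : ∃ c d, ({c, d} : Finset ℕ) ∈ T ∧ Cr a b c d := by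
  obtain ⟨f, hf, hc⟩ := h.2.2.2 _ (isChord_pair.2 ⟨hab, ha, hb⟩) hn
  obtain ⟨c, d, -, -, rfl⟩ := (h.1 _ hf).exists_pair
  exact ⟨c, d, hf, crosses_iff.1 hc⟩

theorem adj (h : IsTriangulation N T) {a b : ℕ} (hab : a + 1 = b) (hb : b < N) :
    ({a, b} : Finset ℕ) ∈ T := by subst hab; exact h.side (by omega)

theorem adj_wrap (h : IsTriangulation N T) {a b : ℕ} (ha : a = 0) (hb : b + 1 = N)
    (h2 : 2 ≤ N) :
    ({a, b} : Finset ℕ) ∈ T := by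
  subst ha; have := h.base h2; rwa [show N - 1 = b by omega] at this

theorem finite (h : IsTriangulation N T) : T.Finite := by
  refine (Finset.finite_toSet (Finset.range N).powerset).subset fun e he => ?_
  simp only [Finset.coe_powerset, Set.mem_preimage, Set.mem_powerset_iff, Finset.coe_subset]
  intro v hv
  exact Finset.mem_range.2 ((h.1 e he).2 v hv)

end IsTriangulation

/-- Positions of the vertices in the cyclic order that starts at `w`. -/
theorem pos_exists (N w : ℕ) : ∃ pos : ℕ → ℕ,
    ∀ v, (w ≤ v ∧ pos v = v - w) ∨ (v < w ∧ pos v = v + N - w) := by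
  refine ⟨fun v => if w ≤ v then v - w else v + N - w, fun v => ?_⟩
  by_cases h : w ≤ v
  · left; simp [h]
  · right; exact ⟨by omega, by simp [h]⟩

/-- Crossing a chord at `w` means separating its other end from both sides, in the cyclic order
that starts at `w`. -/
theorem cr_pos {N w : ℕ} {pos : ℕ → ℕ}
    (hpos : ∀ v, (w ≤ v ∧ pos v = v - w) ∨ (v < w ∧ pos v = v + N - w)) {x y z : ℕ}
    (hw : w < N) (hx : x < N) (hy : y < N) (hz : z < N) :
    Cr w x y z ↔ (0 < pos y ∧ pos y < pos x ∧ pos x < pos z) ∨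
      (0 < pos z ∧ pos z < pos x ∧ pos x < pos y) := by
  have := hpos x; have := hpos y; have := hpos z
  clear hpos
  unfold Cr; grind

theorem exists_max_nat {P : ℕ → Prop} {N : ℕ} (hP : ∀ v, P v → v < N) (f : ℕ → ℕ)
    (h : ∃ v, P v) :
    ∃ v, P v ∧ ∀ x, P x → f x ≤ f v := by
  classical
  obtain ⟨v, hv⟩ := h
  obtain ⟨y, hy, hm⟩ := Finset.exists_max_image ((Finset.range N).filter P) f
    ⟨v, by simp [hv, hP v hv]⟩
  simp only [Finset.mem_filter, Finset.mem_range] at hy hm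
  exact ⟨y, hy.2, fun x hx => hm x ⟨hP x hx, hx⟩⟩

theorem exists_min_nat {P : ℕ → Prop} {N : ℕ} (hP : ∀ v, P v → v < N) (f : ℕ → ℕ)
    (h : ∃ v, P v) :
    ∃ v, P v ∧ ∀ x, P x → f v ≤ f x := by
  classical
  obtain ⟨v, hv⟩ := h
  obtain ⟨y, hy, hm⟩ := Finset.exists_min_image ((Finset.range N).filter P) f
    ⟨v, by simp [hv, hP v hv]⟩
  simp only [Finset.mem_filter, Finset.mem_range] at hy hm
  exact ⟨y, hy.2, fun x hx => hm x ⟨hP x hx, hx⟩⟩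

namespace IsTriangulation
variable {N : ℕ} {T : Set (Finset ℕ)}

/-- A vertex is joined to its cyclic successor. -/
theorem exists_next (h : IsTriangulation N T) (h2 : 2 ≤ N) {y : ℕ} (hy : y < N) :
    ∃ v, ({y, v} : Finset ℕ) ∈ T ∧ ((v = y + 1) ∨ (y + 1 = N ∧ v = 0)) := by
  by_cases h1 : y + 1 < N
  · exact ⟨y + 1, h.side (by omega), Or.inl rfl⟩
  · exact ⟨0, by rw [Finset.pair_comm]; exact h.adj_wrap rfl (by omega) h2, by omega⟩

/-- A vertex is joined to its cyclic predecessor. -/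
theorem exists_prev (h : IsTriangulation N T) (h2 : 2 ≤ N) {y : ℕ} (hy : y < N) :
    ∃ v, ({y, v} : Finset ℕ) ∈ T ∧ ((v + 1 = y) ∨ (y = 0 ∧ v + 1 = N)) := by
  by_cases h1 : 0 < y
  · exact ⟨y - 1, by rw [Finset.pair_comm]; exact h.adj (by omega) hy, by omega⟩
  · exact ⟨N - 1, h.adj_wrap (by omega) (by omega) h2, by omega⟩

/-- If the edge `{y, z}` separates `w` from `x`, then it has a triangle on the side of `x`: its
apex `q` is the neighbour of `y` on that side closest to `z`. -/
theorem exists_apex (h : IsTriangulation N T) {w x y z : ℕ} (hyz : ({y, z} : Finset ℕ) ∈ T)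
    (hw : w < N) (hx : x < N) (hc : Cr w x y z) :
    ∃ q, q < N ∧ Cr w q y z ∧ ({q, y} : Finset ℕ) ∈ T ∧ ({q, z} : Finset ℕ) ∈ T := by
  obtain ⟨pos, hpos⟩ := pos_exists N y
  obtain ⟨hne, hy, hz⟩ := h.chord hyz
  have h2 : 2 ≤ N := by omega
  have hcr : ∀ v, v < N → (Cr w v y z ↔ (0 < pos w ∧ pos w < pos z ∧ pos z < pos v) ∨
      (0 < pos v ∧ pos v < pos z ∧ pos z < pos w)) := fun v hv => by
    rw [Cr.comm, cr_pos hpos hy hz hw hv]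
  have hxp := (hcr x hx).1 hc
  have key : ∃ q, (({y, q} : Finset ℕ) ∈ T ∧ Cr w q y z) ∧
      ∀ v, ({y, v} : Finset ℕ) ∈ T → Cr w v y z →
        (pos w < pos z → pos q ≤ pos v) ∧ (pos z < pos w → pos v ≤ pos q) := by
    have pw := hpos w; have pz := hpos z; have px := hpos x
    by_cases hlt : pos w < pos z
    · obtain ⟨v, hv, hv'⟩ := h.exists_prev h2 hy
      obtain ⟨q, hq, hm⟩ := exists_min_nat (N := N)
        (P := fun q => ({y, q} : Finset ℕ) ∈ T ∧ Cr w q y z)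
        (fun v hv => (h.chord hv.1).2.2) pos ⟨v, hv, by
          rw [hcr v (h.chord hv).2.2]; have := hpos v; omega⟩
      exact ⟨q, hq, fun v hv hv' => ⟨fun _ => hm v ⟨hv, hv'⟩, by omega⟩⟩
    · obtain ⟨v, hv, hv'⟩ := h.exists_next h2 hy
      obtain ⟨q, hq, hm⟩ := exists_max_nat (N := N)
        (P := fun q => ({y, q} : Finset ℕ) ∈ T ∧ Cr w q y z)
        (fun v hv => (h.chord hv.1).2.2) pos ⟨v, hv, by
          rw [hcr v (h.chord hv).2.2]; have := hpos v; omega⟩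
      exact ⟨q, hq, fun v hv hv' => ⟨by omega, fun _ => hm v ⟨hv, hv'⟩⟩⟩
  obtain ⟨q, ⟨hq, hcq⟩, hm⟩ := key
  have hqN := (h.chord hq).2.2
  refine ⟨q, hqN, hcq, by rwa [Finset.pair_comm], ?_⟩
  by_contra hqz
  obtain ⟨c, d, hcd, hc'⟩ := h.exists_cr hcq.ne.2.2.2.2.1 hqN hz hqz
  have hend : ∃ d, ({y, d} : Finset ℕ) ∈ T ∧ Cr q z y d := by
    rcases hc'.tri (h.not_cr hcd hq) (h.not_cr hcd hyz) with rfl | rfl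
    · exact ⟨d, hcd, hc'⟩
    · exact ⟨c, by rwa [Finset.pair_comm], hc'.swap⟩
  obtain ⟨d, hd, hd'⟩ := hend
  have hdN := (h.chord hd).2.2
  have h6 := (cr_pos hpos hy hdN hqN hz).1 hd'.symm
  have h7 := (hcr q hqN).1 hcq
  have h5 : Cr w d y z := by rw [hcr d hdN]; omega
  have h4 := hm d hd h5
  omega

/-- A missing chord `{w, x}` leaves `w` through a triangle `w y z`, where `y` and `z` are the
neighbours of `w` closest to `x` on the two sides. -/
theorem exists_triangle (h : IsTriangulation N T) {w x : ℕ} (hne : w ≠ x) (hw : w < N)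
    (hx : x < N) (hwx : ({w, x} : Finset ℕ) ∉ T) :
    ∃ y z, Cr w x y z ∧ ({w, y} : Finset ℕ) ∈ T ∧ ({w, z} : Finset ℕ) ∈ T ∧
      ({y, z} : Finset ℕ) ∈ T := by
  obtain ⟨pos, hpos⟩ := pos_exists N w
  have h2 : 2 ≤ N := by omega
  obtain ⟨v, hv, hv'⟩ := h.exists_next h2 hw
  obtain ⟨v1, hv1, hv1'⟩ := h.exists_prev h2 hw
  have hvx : v ≠ x := by rintro rfl; exact hwx hv
  have hv1x : v1 ≠ x := by rintro rfl; exact hwx hv1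
  have hvN := (h.chord hv).2.2
  have hv1N := (h.chord hv1).2.2
  have px := hpos x
  have pw := hpos w
  obtain ⟨y, hy, hym⟩ := exists_max_nat (N := N)
    (P := fun q => ({w, q} : Finset ℕ) ∈ T ∧ pos q < pos x)
    (fun v hv => (h.chord hv.1).2.2) pos ⟨v, hv, by have := hpos v; omega⟩
  obtain ⟨z, hz, hzm⟩ := exists_min_nat (N := N)
    (P := fun q => ({w, q} : Finset ℕ) ∈ T ∧ pos x < pos q)
    (fun v hv => (h.chord hv.1).2.2) pos ⟨v1, hv1, by have := hpos v1; omega⟩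
  have hyc := h.chord hy.1
  have hzc := h.chord hz.1
  have py := hpos y
  have hc : Cr w x y z := by
    rw [cr_pos hpos hw hx hyc.2.2 hzc.2.2]; left; exact ⟨by omega, hy.2, hz.2⟩
  refine ⟨y, z, hc, hy.1, hz.1, ?_⟩
  by_contra hyz
  obtain ⟨c, d, hcd, hcr⟩ := h.exists_cr hc.ne.2.2.2.2.2 hyc.2.2 hzc.2.2 hyz
  have hend : ∃ d, ({w, d} : Finset ℕ) ∈ T ∧ Cr y z w d := by
    rcases hcr.tri (h.not_cr hcd hy.1) (h.not_cr hcd hz.1) with rfl | rfl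
    · exact ⟨d, hcd, hcr⟩
    · exact ⟨c, by rwa [Finset.pair_comm], hcr.swap⟩
  obtain ⟨d, hd, hd'⟩ := hend
  have hdN := (h.chord hd).2.2
  have h6 := (cr_pos hpos hw hdN hyc.2.2 hzc.2.2).1 hd'.symm
  have hdx : d ≠ x := by rintro rfl; exact hwx hd
  have pd := hpos d
  have h5 := fun h' => hym d ⟨hd, h'⟩
  have h7 := fun h' => hzm d ⟨hd, h'⟩
  have h8 := hy.2
  have h9 := hz.2
  omega

/-- If `w y z` and `q y z` are the triangles on the two sides of the edge `{y, z}`, then replacing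
`{y, z}` by `{w, q}` is a flip. -/
theorem flip (h : IsTriangulation N T) {w q y z : ℕ} (hc : Cr w q y z)
    (hyz : ({y, z} : Finset ℕ) ∈ T) (hwy : ({w, y} : Finset ℕ) ∈ T)
    (hwz : ({w, z} : Finset ℕ) ∈ T) (hqy : ({q, y} : Finset ℕ) ∈ T)
    (hqz : ({q, z} : Finset ℕ) ∈ T) :
    Flip N T (insert {w, q} (T \ {{y, z}})) := by
  have hwq : ({w, q} : Finset ℕ) ∉ T := fun h1 => h.not_cr h1 hyz hc
  have hwc := h.chord hwy
  have hqc := h.chord hqy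
  have hyc := h.chord hyz
  have hne := hc.ne
  have hcross : ∀ c d, ({c, d} : Finset ℕ) ∈ T → Cr w q c d → ({c, d} : Finset ℕ) = {y, z} := by
    intro c d hcd hcr
    have h1 := hcr.tri (r := y) (h.not_cr hcd (by rwa [Finset.pair_comm]))
      (h.not_cr hcd (by rwa [Finset.pair_comm]))
    have h2 := hcr.tri (r := z) (h.not_cr hcd (by rwa [Finset.pair_comm]))
      (h.not_cr hcd (by rwa [Finset.pair_comm]))
    rw [pair_eq_iff]
    omega
  refine ⟨h, ⟨?_, ?_, ?_, ?_⟩, {y, z}, {w, q}, hyz, hwq, rfl⟩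
  · rintro e (rfl | he)
    · exact isChord_pair.2 ⟨hne.1, hwc.2.1, hqc.2.1⟩
    · exact h.1 e he.1
  · intro e he
    refine Or.inr ⟨h.2.1 e he, ?_⟩
    rintro (rfl : e = {y, z})
    rcases he with ⟨i, hi, he⟩ | ⟨hi, he⟩
    · rw [pair_eq_iff] at he; unfold Cr at hc; grind
    · rw [pair_eq_iff] at he; unfold Cr at hc; grind
  · have key : ∀ f ∈ T \ {({y, z} : Finset ℕ)}, ¬ Crosses {w, q} f := by
      rintro f ⟨hf, hf'⟩ hcr
      obtain ⟨c, d, -, -, rfl⟩ := (h.1 _ hf).exists_pair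
      exact hf' (hcross c d hf (crosses_iff.1 hcr))
    rintro e (rfl | he) f (rfl | hf)
    · rw [crosses_iff]; exact fun h1 => h1.ne.2.1 rfl
    · exact key f hf
    · intro hcr
      obtain ⟨c, d, -, -, rfl⟩ := (h.1 _ he.1).exists_pair
      exact key _ he (crosses_iff.2 (crosses_iff.1 hcr).symm)
    · exact h.2.2.1 e he.1 f hf.1
  · intro e he heT
    obtain ⟨a, b, hab, hb, rfl⟩ := he.exists_pair
    by_cases heyz : ({a, b} : Finset ℕ) = {y, z}
    · exact ⟨{w, q}, Or.inl rfl, by rw [heyz, crosses_iff]; exact hc.symm⟩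
    have heT' : ({a, b} : Finset ℕ) ∉ T := fun h1 => heT (Or.inr ⟨h1, heyz⟩)
    obtain ⟨c, d, hcd, hcr⟩ := h.exists_cr (by omega) (by omega) hb heT'
    by_cases hcyz : ({c, d} : Finset ℕ) = {y, z}
    · have hcr' : Cr y z a b := by
        rw [Cr.comm]; rw [← crosses_iff] at hcr ⊢; rwa [hcyz] at hcr
      have mem : ∀ s t, ({s, t} : Finset ℕ) ∈ T → ¬ ({s, t} : Finset ℕ) = {y, z} →
          Cr a b s t → ∃ f ∈ insert {w, q} (T \ {({y, z} : Finset ℕ)}), Crosses {a, b} f :=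
        fun s t hst hst' hcr => ⟨{s, t}, Or.inr ⟨hst, hst'⟩, crosses_iff.2 hcr⟩
      by_cases h1 : Cr a b w y
      · exact mem w y hwy (by rw [pair_eq_iff]; omega) h1
      by_cases h2 : Cr a b w z
      · exact mem w z hwz (by rw [pair_eq_iff]; omega) h2
      by_cases h3 : Cr a b q y
      · exact mem q y hqy (by rw [pair_eq_iff]; omega) h3
      by_cases h4 : Cr a b q z
      · exact mem q z hqz (by rw [pair_eq_iff]; omega) h4
      have h5 := hcr'.tri h1 h2
      have h6 := hcr'.tri h3 h4
      exact absurd (Or.inl (by rw [pair_eq_iff]; omega)) heT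
    · exact ⟨{c, d}, Or.inr ⟨hcd, hcyz⟩, crosses_iff.2 hcr⟩

end IsTriangulation

/-! ### Flip paths -/

/-- `FlipPath N T T' k`: the triangulation `T'` is reached from `T` by at most `k` flips. The
constructor `refl` allows every bound `k`, which makes the predicate monotone in `k`. -/
inductive FlipPath (N : ℕ) : Set (Finset ℕ) → Set (Finset ℕ) → ℕ → Prop
  | refl (T : Set (Finset ℕ)) (k : ℕ) : FlipPath N T T k
  | step {T T₁ T₂ : Set (Finset ℕ)} {k : ℕ} :
      Flip N T T₁ → FlipPath N T₁ T₂ k → FlipPath N T T₂ (k + 1)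

theorem Flip.symm {N : ℕ} {T T' : Set (Finset ℕ)} (h : Flip N T T') : Flip N T' T := by
  obtain ⟨h1, h2, e, f, he, hf, rfl⟩ := h
  refine ⟨h2, h1, f, e, Or.inl rfl, ?_, ?_⟩
  · rintro (rfl | h3)
    · exact hf he
    · exact h3.2 rfl
  · ext x
    simp only [Set.mem_insert_iff, Set.mem_sdiff, Set.mem_singleton_iff]
    by_cases hx : x = e
    · subst hx; simp [he]
    · by_cases hx' : x = f
      · subst hx'; simp [hx, hf]
      · simp [hx, hx']

namespace FlipPath
variable {N : ℕ} {T T₁ T₂ : Set (Finset ℕ)} {k l : ℕ}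

theorem mono (h : FlipPath N T T₁ k) (hkl : k ≤ l) : FlipPath N T T₁ l := by
  induction h generalizing l with
  | refl T k => exact refl T l
  | step h1 _ ih =>
    obtain ⟨l, rfl⟩ : ∃ m, l = m + 1 := ⟨l - 1, by omega⟩
    exact step h1 (ih (by omega))

theorem trans (h : FlipPath N T T₁ k) (h' : FlipPath N T₁ T₂ l) : FlipPath N T T₂ (k + l) := by
  induction h with
  | refl T k => exact h'.mono (by omega)
  | step h1 _ ih => exact (step h1 (ih h')).mono (by omega)

theorem symm (h : FlipPath N T T₁ k) : FlipPath N T₁ T k := by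
  induction h with
  | refl T k => exact refl T k
  | step h1 _ ih => exact ih.trans (step h1.symm (refl _ 0))

theorem flipDist_le (h : FlipPath N T T₁ k) : flipDist N T T₁ ≤ k := by
  suffices H : ∃ l ≤ k, ∃ g, IsFlipSeq N T T₁ l g by
    obtain ⟨l, hl, g, hg⟩ := H
    exact le_trans (Nat.sInf_le (show l ∈ {l | _} from ⟨g, hg⟩)) hl
  induction h with
  | refl T k => exact ⟨0, by omega, fun _ => T, rfl, rfl, fun i hi => by omega⟩
  | @step T T₁ T₂ k h1 _ ih =>
    obtain ⟨l, hl, g, h0, h2, h3⟩ := ih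
    refine ⟨l + 1, by omega, fun i => Nat.casesOn i T g, rfl, h2, fun i hi => ?_⟩
    cases i with
    | zero => simpa [h0] using h1
    | succ i => exact h3 i (by omega)

theorem ncard_eq (h : FlipPath N T T₁ k) : T.ncard = T₁.ncard := by
  induction h with
  | refl T k => rfl
  | step h1 _ ih =>
    rw [← ih]
    obtain ⟨h1, h2, e, f, he, hf, rfl⟩ := h1
    rw [Set.ncard_insert_of_notMem (fun h => hf h.1) (h1.finite.sdiff),
      Set.ncard_sdiff_singleton_add_one he h1.finite]

end FlipPath

/-! ### Connecting triangulations with common edges -/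

namespace IsTriangulation
variable {N : ℕ} {T F : Set (Finset ℕ)}

/-- Filling the star of a vertex `w`. Let `F` be a set of edges of `T` to be kept, and let `K`
contain the far end of every missing chord at `w` that crosses no edge of `F`. With at most
`K.card` flips one reaches a triangulation that still contains `F` and contains every chord at
`w` crossing no edge of `F`: flipping the side opposite to `w` of a triangle at `w` crossed by a
missing chord adds an edge at `w`, and no edge at `w` is ever removed. -/
theorem push {w : ℕ} (hw : w < N) (K : Finset ℕ) (h : IsTriangulation N T) (hF : F ⊆ T)
    (hK : ∀ x, x < N → x ≠ w → ({w, x} : Finset ℕ) ∉ T → (∀ f ∈ F, ¬ Crosses {w, x} f) → x ∈ K) :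
    ∃ C, IsTriangulation N C ∧ FlipPath N T C K.card ∧ F ⊆ C ∧
      ∀ x, x < N → x ≠ w → (∀ f ∈ F, ¬ Crosses {w, x} f) → ({w, x} : Finset ℕ) ∈ C := by
  induction hk : K.card generalizing K T with
  | zero =>
    refine ⟨T, h, .refl _ _, hF, fun x hx hxw hxF => ?_⟩
    by_contra hxT
    have := hK x hx hxw hxT hxF
    rw [Finset.card_eq_zero.1 hk] at this
    simp at this
  | succ k ih =>
    by_cases hall : ∀ x, x < N → x ≠ w → (∀ f ∈ F, ¬ Crosses {w, x} f) → ({w, x} : Finset ℕ) ∈ T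
    · exact ⟨T, h, .refl _ _, hF, hall⟩
    push Not at hall
    obtain ⟨x, hx, hxw, hxF, hxT⟩ := hall
    obtain ⟨y, z, hc, hwy, hwz, hyz⟩ := h.exists_triangle hxw.symm hw hx hxT
    obtain ⟨q, hq, hcq, hqy, hqz⟩ := h.exists_apex hyz hw hx hc
    have hfl := h.flip hcq hyz hwy hwz hqy hqz
    have hF' : F ⊆ insert {w, q} (T \ {{y, z}}) := by
      intro f hf
      refine Or.inr ⟨hF hf, ?_⟩
      rintro (rfl : f = _)
      exact hxF _ hf (crosses_iff.2 hc)
    have hqK : q ∈ K := hK q hq hcq.ne.1.symm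
      (fun h1 => h.not_cr h1 hyz hcq)
      (fun f hf => hfl.2.1.2.2.1 _ (Or.inl rfl) _ (hF' hf))
    obtain ⟨C, hC, hp, hFC, hstar⟩ := ih (K.erase q) hfl.2.1 hF' (by
        intro v hv hvw hvT hvF
        refine Finset.mem_erase.2 ⟨?_, hK v hv hvw (fun h1 => hvT (Or.inr ⟨h1, ?_⟩)) hvF⟩
        · rintro rfl; exact hvT (Or.inl rfl)
        · intro h2
          have h2 := pair_eq_iff.1 h2
          have := hc.ne
          omega)
      (by rw [Finset.card_erase_of_mem hqK]; omega)
    exact ⟨C, hC, .step hfl hp, hFC, hstar⟩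

/-- The canonical triangulation containing `F`: a chord avoiding `F` belongs to it when its smaller
end is smaller than that of every chord avoiding `F` which crosses it. -/
def lexTri (N : ℕ) (F : Set (Finset ℕ)) : Set (Finset ℕ) :=
  {e | ∃ a b, a < b ∧ b < N ∧ e = {a, b} ∧ (∀ f ∈ F, ¬ Crosses {a, b} f) ∧
    ∀ c d, c < d → d < N → (∀ f ∈ F, ¬ Crosses {c, d} f) → Cr a b c d → a < c}

/-- Every triangulation containing `F` is turned into `lexTri N F` by at most `(T \ F).ncard`
flips: some edge of `T \ lexTri N F` flips to an edge of `lexTri N F`. -/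
theorem flipPath_lexTri (h : IsTriangulation N T) (hF : F ⊆ T) :
    FlipPath N T (lexTri N F) (T \ F).ncard := by
  have hsub : F ⊆ lexTri N F := by
    intro e he
    obtain ⟨a, b, hab, hb, rfl⟩ := (h.1 _ (hF he)).exists_pair
    refine ⟨a, b, hab, hb, rfl, fun f hf => h.2.2.1 _ (hF he) _ (hF hf), ?_⟩
    intro c d hcd hd hcF hcr
    exact absurd (crosses_iff.2 hcr.symm) (hcF _ he)
  suffices H : ∀ k, ∀ T : Set (Finset ℕ), IsTriangulation N T → F ⊆ T →
      (T \ lexTri N F).ncard ≤ k → FlipPath N T (lexTri N F) k from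
    H _ T h hF (Set.ncard_le_ncard (Set.sdiff_subset_sdiff_right hsub) h.finite.sdiff)
  clear h hF
  intro k
  induction k with
  | zero =>
    intro T h hF hk
    have h0 : T ⊆ lexTri N F := by
      rw [← Set.sdiff_eq_empty]
      exact (Set.ncard_eq_zero h.finite.sdiff).1 (by omega)
    have : T = lexTri N F := by
      refine Set.Subset.antisymm h0 ?_
      rintro e ⟨a, b, hab, hb, rfl, hfr, hmin⟩
      by_contra heT
      obtain ⟨f, hf, hcr⟩ := h.2.2.2 _ (isChord_pair.2 ⟨by omega, by omega, hb⟩) heT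
      obtain ⟨c, d, hcd, hd, rfl, hfr', hmin'⟩ := h0 hf
      have h1 := hmin c d hcd hd hfr' (crosses_iff.1 hcr)
      have h2 := hmin' a b hab hb hfr (crosses_iff.1 hcr).symm
      omega
    rw [← this]; exact .refl _ _
  | succ k ih =>
    intro T h hF hk
    by_cases hsub' : T ⊆ lexTri N F
    · refine (ih T h hF ?_).mono (by omega)
      rw [Set.sdiff_eq_empty.2 hsub']; simp
    -- the edge outside `lexTri N F` to be flipped has the smallest left end, and among those the
    -- largest right end
    obtain ⟨e, he, heC⟩ := Set.not_subset.1 hsub'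
    obtain ⟨a₀, b₀, hab₀, hb₀, rfl⟩ := (h.1 _ he).exists_pair
    obtain ⟨a, ⟨b₁, hb₁⟩, ha⟩ := exists_min_nat (N := N)
      (P := fun a => ∃ b, a < b ∧ b < N ∧ ({a, b} : Finset ℕ) ∈ T ∧
        ({a, b} : Finset ℕ) ∉ lexTri N F)
      (by rintro v ⟨b, h1, h2, -⟩; omega) id ⟨a₀, b₀, hab₀, hb₀, he, heC⟩
    obtain ⟨b, hb, hbm⟩ := exists_max_nat (N := N)
      (P := fun b => a < b ∧ b < N ∧ ({a, b} : Finset ℕ) ∈ T ∧ ({a, b} : Finset ℕ) ∉ lexTri N F)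
      (by rintro v ⟨h1, h2, -⟩; omega) id ⟨b₁, hb₁⟩
    clear he heC hab₀ hb₀ a₀ b₀ hb₁ b₁
    obtain ⟨hab, hbN, habT, habC⟩ := hb
    have hfree : ∀ s t, ({s, t} : Finset ℕ) ∈ T → ∀ f ∈ F, ¬ Crosses {s, t} f :=
      fun s t hst f hf => h.2.2.1 _ hst _ (hF hf)
    have hbad : ∃ c d, c < d ∧ d < N ∧ (∀ f ∈ F, ¬ Crosses {c, d} f) ∧ Cr a b c d ∧ c ≤ a := by
      by_contra hno
      refine habC ⟨a, b, hab, hbN, rfl, hfree a b habT, fun c d h1 h2 h3 h4 => ?_⟩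
      by_contra h5
      exact hno ⟨c, d, h1, h2, h3, h4, by omega⟩
    obtain ⟨c, d, hcd, hd, hcF, hcr, hca⟩ := hbad
    have hord : c < a ∧ a < d ∧ d < b := by unfold Cr at hcr; grind
    obtain ⟨q, hq, hcq, hqa, hqb⟩ := h.exists_apex habT (by omega) hd hcr.symm
    obtain ⟨p, hp, hcp, hpa, hpb⟩ := h.exists_apex (w := d) (x := c) habT hd (by omega)
      (by have := hcr; unfold Cr at *; grind)
    have hqo : a < q ∧ q < b := by clear ha hbm; unfold Cr at hcq; grind
    have hpo : p < a ∨ b < p := by clear ha hbm; unfold Cr at hcp; grind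
    have hpq : Cr p q a b := by clear ha hbm; unfold Cr; grind
    -- edges of `T` crossing `{c, d}` and starting after `c` are not in `lexTri N F`, so the choice
    -- of `{a, b}` applies to them
    have hlong : ∀ s t, s < t → t < N → ({s, t} : Finset ℕ) ∈ T → c < s → Cr s t c d →
        a < s ∨ (a = s ∧ t ≤ b) := by
      intro s t hst ht hT hcs hc
      have hC : ({s, t} : Finset ℕ) ∉ lexTri N F := by
        rintro ⟨s', t', hst', ht', heq, hfr, hmin⟩
        have := pair_eq_iff.1 heq
        obtain ⟨rfl, rfl⟩ : s = s' ∧ t = t' := by omega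
        have := hmin c d hcd hd hcF hc
        omega
      have h1 := ha s ⟨t, hst, ht, hT, hC⟩
      simp only [id] at h1
      rcases h1.lt_or_eq with h1 | rfl
      · exact Or.inl h1
      · exact Or.inr ⟨rfl, hbm t ⟨hst, ht, hT, hC⟩⟩
    have hpa' : p < a := by
      rcases hpo with h1 | h1
      · exact h1
      · have := hlong a p (by omega) hp (by rwa [Finset.pair_comm]) hord.1
          (by clear hlong ha hbm; unfold Cr; grind)
        omega
    have hfl := h.flip hpq habT hpa hpb hqa hqb
    have habF : ({a, b} : Finset ℕ) ∉ F := fun h1 => hcF _ h1 (crosses_iff.2 hcr.symm)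
    have hF' : F ⊆ insert {p, q} (T \ {{a, b}}) := by
      intro f hf
      refine Or.inr ⟨hF hf, ?_⟩
      rintro (rfl : f = _)
      exact habF hf
    have hpqC : ({p, q} : Finset ℕ) ∈ lexTri N F := by
      refine ⟨p, q, by omega, hq, rfl, fun f hf => hfl.2.1.2.2.1 _ (Or.inl rfl) _ (hF' hf), ?_⟩
      intro c' d' hcd' hd' hcF' hcr'
      by_contra hle
      have hord' : c' < p ∧ p < d' ∧ d' < q := by
        clear hlong ha hbm; unfold Cr at hcr'; grind
      -- otherwise `{p, b}` is an edge outside `lexTri N F` with a smaller left end than `{a, b}`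
      have hC : ({p, b} : Finset ℕ) ∉ lexTri N F := by
        rintro ⟨s', t', hst', ht', heq, hfr, hmin⟩
        have := pair_eq_iff.1 heq
        obtain ⟨rfl, rfl⟩ : p = s' ∧ b = t' := by omega
        have := hmin c' d' hcd' hd' hcF' (by clear hlong ha hbm hmin; unfold Cr; grind)
        omega
      have := ha p ⟨b, by omega, hbN, hpb, hC⟩
      simp only [id] at this
      omega
    refine .step hfl (ih _ hfl.2.1 hF' ?_)
    have : insert {p, q} (T \ {{a, b}}) \ lexTri N F ⊆ (T \ lexTri N F) \ {{a, b}} := by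
      rintro e ⟨rfl | ⟨he, he'⟩, heC⟩
      · exact absurd hpqC heC
      · exact ⟨⟨he, heC⟩, he'⟩
    have h1 := Set.ncard_le_ncard this h.finite.sdiff.sdiff
    rw [Set.ncard_sdiff_singleton_of_mem (show _ ∈ T \ lexTri N F from ⟨habT, habC⟩)] at h1
    omega

/-- Two triangulations that share the edges in `F` are joined by a flip path whose length is the
total number of edges outside `F`. -/
theorem flipPath_of_common {T' : Set (Finset ℕ)} (h : IsTriangulation N T)
    (h' : IsTriangulation N T') (hF : F ⊆ T) (hF' : F ⊆ T') :
    FlipPath N T T' ((T \ F).ncard + (T' \ F).ncard) :=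
  (h.flipPath_lexTri hF).trans (h'.flipPath_lexTri hF').symm

/-- A triangulation of the `N`-gon has at most `2 * N - 3` edges: flips keep the number of edges,
and filling the star of the vertex `0` leads to the fan triangulation. -/
theorem ncard_le (h : IsTriangulation N T) (hN : 2 ≤ N) : T.ncard + 3 ≤ 2 * N := by
  obtain ⟨C, hC, hp, -, hstar⟩ := push (F := ∅) (w := 0) (by omega) (Finset.range N) h
    (Set.empty_subset _) (fun x hx _ _ _ => Finset.mem_range.2 hx)
  rw [hp.ncard_eq]
  have hsub : C ⊆ ↑((Finset.range (N - 1)).image (fun i => ({i, i + 1} : Finset ℕ)) ∪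
      (Finset.range (N - 2)).image (fun i => ({0, i + 2} : Finset ℕ))) := by
    intro e he
    obtain ⟨a, b, hab, hb, rfl⟩ := (hC.1 _ he).exists_pair
    simp only [Finset.coe_union, Finset.coe_image, Finset.coe_range, Set.mem_union, Set.mem_image,
      Set.mem_Iio]
    by_cases h1 : b = a + 1
    · left; exact ⟨a, by omega, by rw [h1]⟩
    · right
      have ha : a = 0 := by
        by_contra ha
        have h2 := hstar (a + 1) (by omega) (by omega) (by simp)
        exact hC.not_cr he h2 (by unfold Cr; omega)
      exact ⟨b - 2, by omega, by rw [ha, show b - 2 + 2 = b by omega]⟩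
  have h1 := Set.ncard_le_ncard hsub (Finset.finite_toSet _)
  rw [Set.ncard_coe_finset] at h1
  have h2 := Finset.card_union_le ((Finset.range (N - 1)).image (fun i => ({i, i + 1} : Finset ℕ)))
    ((Finset.range (N - 2)).image (fun i => ({0, i + 2} : Finset ℕ)))
  have h3 := Finset.card_image_le (s := Finset.range (N - 1))
    (f := fun i => ({i, i + 1} : Finset ℕ))
  have h4 := Finset.card_image_le (s := Finset.range (N - 2))
    (f := fun i => ({0, i + 2} : Finset ℕ))
  rw [Finset.card_range] at h3 h4
  by_cases hN3 : N = 2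
  · subst hN3; omega
  · omega

end IsTriangulation

/-- Every non-crossing set of chords containing the boundary extends to a triangulation. -/
theorem exists_isTriangulation {N : ℕ} {F : Set (Finset ℕ)} (hF : ∀ e ∈ F, IsChord N e)
    (hB : ∀ e, BoundaryEdge N e → e ∈ F) (hc : ∀ e ∈ F, ∀ f ∈ F, ¬ Crosses e f) :
    ∃ T, IsTriangulation N T ∧ F ⊆ T := by
  have hfin : {G : Set (Finset ℕ) | (∀ e ∈ G, IsChord N e) ∧
      ∀ e ∈ G, ∀ f ∈ G, ¬ Crosses e f}.Finite := by
    refine (Finset.finite_toSet (Finset.range N).powerset).finite_subsets.subset ?_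
    rintro G ⟨hG, -⟩ e he
    simp only [Finset.coe_powerset, Set.mem_preimage, Set.mem_powerset_iff, Finset.coe_subset]
    exact fun v hv => Finset.mem_range.2 ((hG e he).2 v hv)
  obtain ⟨T, hle, ⟨hT1, hT2⟩, hmax⟩ := hfin.exists_le_maximal ⟨hF, hc⟩
  refine ⟨T, ⟨hT1, fun e he => hle (hB e he), hT2, fun e he heT => ?_⟩, hle⟩
  by_contra hno
  push Not at hno
  refine heT (hmax (y := insert e T) ⟨?_, ?_⟩ (Set.subset_insert _ _) (Or.inl rfl))
  · rintro x (rfl | hx)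
    · exact he
    · exact hT1 x hx
  · obtain ⟨a, b, -, -, rfl⟩ := he.exists_pair
    rintro x (rfl | hx) y (rfl | hy)
    · rw [crosses_iff]; exact fun h => h.ne.2.1 rfl
    · exact hno y hy
    · intro hcr
      obtain ⟨c, d, -, -, rfl⟩ := (hT1 _ hx).exists_pair
      exact hno _ hx (crosses_iff.2 (crosses_iff.1 hcr).symm)
    · exact hT2 x hx y hy

/-! ### Collapsing and moving a fan -/

namespace IsTriangulation
variable {N : ℕ} {T : Set (Finset ℕ)}

/-- Collapsing a fan: if `u` is joined to `L, …, L + β + 1`, then `β` flips replace the `β` inner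
fan edges by the edges from `L` to `L + 2, …, L + β + 1`, keeping all other edges. This fills the
star of `L`. -/
theorem collapse (h : IsTriangulation N T) {L u β : ℕ} (hL : L + β + 1 < N)
    (hu : u < L ∨ L + β + 1 < u) (hfan : ∀ k ≤ β + 1, ({u, L + k} : Finset ℕ) ∈ T) :
    ∃ C, IsTriangulation N C ∧ FlipPath N T C β ∧
      (∀ e ∈ T, (∀ k, 1 ≤ k → k ≤ β → e ≠ {u, L + k}) → e ∈ C) ∧
      ∀ k, 1 ≤ k → k ≤ β → ({L, L + k + 1} : Finset ℕ) ∈ C := by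
  have huN := (h.chord (hfan 0 (by omega))).2.1
  obtain ⟨C, hC, hp, hFC, hstar⟩ := push (w := L) (by omega)
    ((Finset.Icc 1 β).image (fun k => L + k + 1)) h
    (F := {e | e ∈ T ∧ ∀ k, 1 ≤ k → k ≤ β → e ≠ {u, L + k}}) (fun e he => he.1) (by
      intro x hx hxL hxT hxF
      obtain ⟨c, d, hcd, hcr⟩ := h.exists_cr hxL.symm (by omega) hx hxT
      have h1 : ∃ k, 1 ≤ k ∧ k ≤ β ∧ ({c, d} : Finset ℕ) = {u, L + k} := by
        by_contra hno
        push Not at hno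
        exact hxF _ ⟨hcd, hno⟩ (crosses_iff.2 hcr)
      obtain ⟨k, hk1, hk2, heq⟩ := h1
      rw [← crosses_iff, heq, crosses_iff] at hcr
      have h2 : ¬ Cr L x u (L + (β + 1)) := fun h2 =>
        hxF _ ⟨hfan (β + 1) le_rfl, fun j _ hj hj' => by
          have := pair_eq_iff.1 hj'; omega⟩ (crosses_iff.2 h2)
      refine Finset.mem_image.2 ⟨x - L - 1, ?_⟩
      clear hxF hfan
      rw [Finset.mem_Icc]
      unfold Cr at *
      grind)
  refine ⟨C, hC, hp.mono ?_, fun e he he' => hFC ⟨he, he'⟩, fun k hk1 hk2 => ?_⟩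
  · exact Finset.card_image_le.trans (by simp)
  · refine hstar _ (by omega) (by omega) ?_
    rintro f ⟨hf, hf'⟩ hcr
    obtain ⟨c, d, -, -, rfl⟩ := (h.1 _ hf).exists_pair
    rw [crosses_iff] at hcr
    -- an edge crossing `{L, L + k + 1}` ends at one of the vertices `L + 1, …, L + k`; unless its
    -- other end is `u`, it crosses a neighbouring fan edge
    have hend : ∃ j d', 1 ≤ j ∧ j ≤ k ∧ (d' < L ∨ L + k + 1 < d') ∧
        ({c, d} : Finset ℕ) = {d', L + j} := by
      simp only [pair_eq_iff]
      by_cases hc : L < c ∧ c < L + k + 1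
      · refine ⟨c - L, d, ?_⟩; clear hstar hFC hf' hfan; unfold Cr at hcr; grind
      · refine ⟨d - L, c, ?_⟩; clear hstar hFC hf' hfan; unfold Cr at hcr; grind
    obtain ⟨j, d', hj1, hj2, hd', heq⟩ := hend
    rw [heq] at hf hf'
    have h1 := h.not_cr hf (hfan (j - 1) (by omega))
    have h2 := h.not_cr hf (hfan (j + 1) (by omega))
    have hne : d' ≠ u := by rintro rfl; exact hf' j hj1 (by omega) rfl
    clear hstar hFC hf' hfan hcr heq
    unfold Cr at h1 h2
    grind

/-- Moving a fan: if `u` is joined to `L, …, L + β + 1` and `u u' (L + β + 1)` is a triangle, then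
`β + 1` flips replace the fan edges other than `{u, L}` by edges from `u'`, keeping all other
edges. This fills the star of `u'`. The orientation hypothesis `hor` says that the cyclic order
is `L, L + β + 1, u', u`, so that the flipped region is the convex polygon with vertices
`L, …, L + β + 1, u', u`. -/
theorem shift (h : IsTriangulation N T) {L u u' β : ℕ} (hL : L + β + 1 < N)
    (hor : (L + β + 1 < u' ∧ u' < u) ∨ (u < L ∧ L + β + 1 < u') ∨ (u' < u ∧ u < L))
    (hfan : ∀ k ≤ β + 1, ({u, L + k} : Finset ℕ) ∈ T)
    (huu : ({u, u'} : Finset ℕ) ∈ T) (huR : ({u', L + β + 1} : Finset ℕ) ∈ T) :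
    ∃ C, IsTriangulation N C ∧ FlipPath N T C (β + 1) ∧
      (∀ e ∈ T, (∀ k, 1 ≤ k → k ≤ β + 1 → e ≠ {u, L + k}) → e ∈ C) ∧
      ∀ k ≤ β, ({u', L + k} : Finset ℕ) ∈ C := by
  have huN := (h.chord huu).2.1
  have huN' := (h.chord huu).2.2
  obtain ⟨C, hC, hp, hFC, hstar⟩ := push (w := u') huN'
    ((Finset.range (β + 1)).image (fun k => L + k)) h
    (F := {e | e ∈ T ∧ ∀ k, 1 ≤ k → k ≤ β + 1 → e ≠ {u, L + k}}) (fun e he => he.1) (by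
      intro x hx hxL hxT hxF
      obtain ⟨c, d, hcd, hcr⟩ := h.exists_cr hxL.symm (by omega) hx hxT
      have h1 : ∃ k, 1 ≤ k ∧ k ≤ β + 1 ∧ ({c, d} : Finset ℕ) = {u, L + k} := by
        by_contra hno
        push Not at hno
        exact hxF _ ⟨hcd, hno⟩ (crosses_iff.2 hcr)
      obtain ⟨k, hk1, hk2, heq⟩ := h1
      rw [← crosses_iff, heq, crosses_iff] at hcr
      have h2 : ¬ Cr u' x u (L + 0) := fun h2 =>
        hxF _ ⟨hfan 0 (by omega), fun j _ hj hj' => by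
          have := pair_eq_iff.1 hj'; omega⟩ (crosses_iff.2 h2)
      refine Finset.mem_image.2 ⟨x - L, ?_⟩
      clear hxF hfan
      rw [Finset.mem_range]
      unfold Cr at *
      grind)
  refine ⟨C, hC, hp.mono ?_, fun e he he' => hFC ⟨he, he'⟩, fun k hk2 => ?_⟩
  · exact Finset.card_image_le.trans (by simp)
  · refine hstar _ (by omega) (by omega) ?_
    rintro f ⟨hf, hf'⟩ hcr
    obtain ⟨c, d, -, -, rfl⟩ := (h.1 _ hf).exists_pair
    rw [crosses_iff] at hcr
    have h3 := h.not_cr hf huR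
    -- an edge crossing `{u', L + k}` ends at one of `L + k + 1, …, L + β + 1`; unless its other
    -- end is `u`, it crosses a neighbouring fan edge or the edge `{u, u'}`
    have hend : ∃ j d', k < j ∧ j ≤ β + 1 ∧ Cr u' (L + k) (L + j) d' ∧
        ({c, d} : Finset ℕ) = {d', L + j} := by
      simp only [pair_eq_iff]
      by_cases hc : L + k < c ∧ c ≤ L + β + 1
      · refine ⟨c - L, d, ?_⟩; clear hstar hFC hf' hfan
        refine ⟨by omega, by omega, by rwa [show L + (c - L) = c by omega], by omega⟩
      · refine ⟨d - L, c, ?_⟩; clear hstar hFC hf' hfan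
        have : L + k < d ∧ d ≤ L + β + 1 := by unfold Cr at *; grind
        refine ⟨by omega, by omega, ?_, by omega⟩
        rw [show L + (d - L) = d by omega]; exact hcr.swap
    obtain ⟨j, d', hj1, hj2, hd', heq⟩ := hend
    rw [heq] at hf hf'
    have h1 := h.not_cr hf (hfan (j - 1) (by omega))
    have hne : d' ≠ u := by rintro rfl; exact hf' j (by omega) (by omega) rfl
    have h2 : j ≤ β → ¬ Cr d' (L + j) u (L + (j + 1)) :=
      fun hj => h.not_cr hf (hfan (j + 1) (by omega))
    have h4 := h.not_cr hf huu
    clear hstar hFC hf' hfan hcr heq h3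
    unfold Cr at *
    grind

end IsTriangulation

/-! ### Bundles over slots and their frames -/

/-- The `k`-th edge (`1 ≤ k ≤ β`) of the bundle with apex `x` over the slot starting at `l`. For
`x ≠ l` the bundle is a fan with apex `x`; the value `x = l` encodes the collapsed bundle, which
consists of the edges from `l` to `l + 2, …, l + β + 1`. -/
def bundleEdge (x l k : ℕ) : Finset ℕ := if x = l then {l, l + k + 1} else {x, l + k}

/-- A family of slots `L p, …, L p + β + 1` in an `N`-gon obtained from an `n`-gon by inserting
`β` vertices into each of `card ι` boundary edges. Different slots share at most an end, and by
`big` no slot occupies the whole polygon, so that `{L p, L p + β + 1}` is not the base edge. -/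
structure Slots {ι : Type*} [Fintype ι] (N n β : ℕ) (L : ι → ℕ) : Prop where
  card : N = n + β * Fintype.card ι
  three_le : 3 ≤ n
  pos : 1 ≤ β
  lt : ∀ p, L p + β + 1 < N
  big : ∀ p, 0 < L p ∨ L p + β + 2 < N
  sep : ∀ p q, p ≠ q → L p + β + 1 ≤ L q ∨ L q + β + 1 ≤ L p

/-- `x` assigns to every slot an admissible bundle apex: a vertex that is not inside any slot and
is not the right end of the slot itself. The left end is allowed, see `bundleEdge`. -/
def Good {ι : Type*} (N β : ℕ) (L x : ι → ℕ) : Prop :=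
  ∀ p, x p < N ∧ x p ≠ L p + β + 1 ∧ ∀ q, x p ≤ L q ∨ L q + β + 1 ≤ x p

/-- The boundary edges together with all bundle edges for the apex assignment `x`. A triangulation
containing the frame has at most `n - 3` further edges. -/
def frame {ι : Type*} (N β : ℕ) (L x : ι → ℕ) : Set (Finset ℕ) :=
  {e | BoundaryEdge N e} ∪ {e | ∃ p k, 1 ≤ k ∧ k ≤ β ∧ e = bundleEdge (x p) (L p) k}

theorem BoundaryEdge.not_cr {N a b : ℕ} {e : Finset ℕ} (he : BoundaryEdge N e)
    (ha : a < N) (hb : b < N) : ¬ Crosses e {a, b} := by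
  rcases he with ⟨i, hi, rfl⟩ | ⟨h2, rfl⟩
  · rw [crosses_iff]; unfold Cr; omega
  · rw [crosses_iff]; unfold Cr; omega

theorem BoundaryEdge.exists_pair {N : ℕ} {e : Finset ℕ} (he : BoundaryEdge N e) :
    ∃ a b, a < N ∧ b < N ∧ e = {a, b} := by
  rcases he with ⟨i, hi, rfl⟩ | ⟨h2, rfl⟩
  · exact ⟨i, i + 1, by omega, by omega, rfl⟩
  · exact ⟨0, N - 1, by omega, by omega, rfl⟩

theorem BoundaryEdge.isChord {N : ℕ} {e : Finset ℕ} (he : BoundaryEdge N e) (hN : 3 ≤ N) :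
    IsChord N e := by
  rcases he with ⟨i, hi, rfl⟩ | ⟨h2, rfl⟩ <;> rw [isChord_pair] <;> omega

theorem Crosses.symm {e f : Finset ℕ} (h : Crosses e f) : Crosses f e := by
  obtain ⟨a, b, c, d, h1, h2, rfl, rfl, h3⟩ := h
  exact ⟨c, d, a, b, h2, h1, rfl, rfl, h3.symm⟩

section
variable {ι : Type*} [Fintype ι] {N n β : ℕ} {L x y : ι → ℕ}

theorem Slots.le (hs : Slots N n β L) : 3 ≤ N := by
  have h1 := hs.card; have h2 := hs.three_le; omega

theorem bundleEdge_cases (hx : Good N β L x) (p : ι) (k : ℕ) :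
    (x p = L p ∧ bundleEdge (x p) (L p) k = {L p, L p + k + 1}) ∨
    ((x p < L p ∨ L p + β + 1 < x p) ∧ bundleEdge (x p) (L p) k = {x p, L p + k}) := by
  unfold bundleEdge
  split_ifs with h
  · exact Or.inl ⟨h, rfl⟩
  · have h1 := hx p
    have h2 := h1.2.2 p
    exact Or.inr ⟨by omega, rfl⟩

theorem bundleEdge_exists (hs : Slots N n β L) (hx : Good N β L x) (p : ι) {k : ℕ}
    (hk1 : 1 ≤ k) (hk : k ≤ β) : ∃ a b, a ≠ b ∧ a < N ∧ b < N ∧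
      bundleEdge (x p) (L p) k = {a, b} ∧
      ∀ q, q ≠ p → (a ≤ L q ∨ L q + β + 1 ≤ a) ∧ (b ≤ L q ∨ L q + β + 1 ≤ b) := by
  have h1 := hx p
  have h2 := hs.lt p
  rcases bundleEdge_cases hx p k with ⟨h, h'⟩ | ⟨h, h'⟩
  · refine ⟨_, _, by omega, by omega, by omega, h', fun q hq => ?_⟩
    have := hs.sep p q hq.symm; omega
  · refine ⟨_, _, by omega, by omega, by omega, h', fun q hq => ⟨h1.2.2 q, ?_⟩⟩
    have := hs.sep p q hq.symm; omega

theorem bundleEdge_inj (hs : Slots N n β L) (hx : Good N β L x) {p q : ι} {k j : ℕ}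
    (hk1 : 1 ≤ k) (hk : k ≤ β) (hj1 : 1 ≤ j) (hj : j ≤ β)
    (h : bundleEdge (x p) (L p) k = bundleEdge (x q) (L q) j) : p = q ∧ k = j := by
  have hp := (hx p).2.2
  have hq := (hx q).2.2
  by_cases hpq : p = q
  · subst hpq
    refine ⟨rfl, ?_⟩
    rcases bundleEdge_cases hx p k with ⟨h1, h1'⟩ | ⟨h1, h1'⟩ <;>
    rcases bundleEdge_cases hx p j with ⟨h2, h2'⟩ | ⟨h2, h2'⟩ <;>
    rw [h1', h2', pair_eq_iff] at h <;> omega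
  · exfalso
    have := hs.sep p q hpq
    have := hp q
    have := hq p
    rcases bundleEdge_cases hx p k with ⟨h1, h1'⟩ | ⟨h1, h1'⟩ <;>
    rcases bundleEdge_cases hx q j with ⟨h2, h2'⟩ | ⟨h2, h2'⟩ <;>
    rw [h1', h2', pair_eq_iff] at h <;> omega

theorem bundleEdge_not_boundary (hs : Slots N n β L) (hx : Good N β L x) {p : ι} {k : ℕ}
    (hk1 : 1 ≤ k) (hk : k ≤ β) : ¬ BoundaryEdge N (bundleEdge (x p) (L p) k) := by
  have h3 := hs.lt p
  have h4 := hs.big p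
  rcases bundleEdge_cases hx p k with ⟨h1, h1'⟩ | ⟨h1, h1'⟩ <;> rw [h1'] <;>
  rintro (⟨i, hi, h⟩ | ⟨h2, h⟩) <;> rw [pair_eq_iff] at h <;> omega

theorem frame_ncard (hs : Slots N n β L) (hx : Good N β L x) (hfin : (frame N β L x).Finite) :
    N + β * Fintype.card ι ≤ (frame N β L x).ncard := by
  classical
  have hN := hs.le
  let b : ℕ → Finset ℕ := fun i => if i + 1 < N then {i, i + 1} else {0, N - 1}
  let A := (Finset.range N).image b
  let B := ((Finset.univ : Finset ι) ×ˢ Finset.Icc 1 β).image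
    (fun r => bundleEdge (x r.1) (L r.1) r.2)
  have hA : A.card = N := by
    rw [Finset.card_image_of_injOn, Finset.card_range]
    intro i hi j hj h
    simp only [Finset.coe_range, Set.mem_Iio] at hi hj
    simp only [b] at h
    split_ifs at h <;> rw [pair_eq_iff] at h <;> omega
  have hB : B.card = β * Fintype.card ι := by
    rw [Finset.card_image_of_injOn, Finset.card_product, Nat.card_Icc, Finset.card_univ]
    · rw [mul_comm]; simp
    · rintro ⟨p, k⟩ hp ⟨q, j⟩ hq h
      simp only [Finset.coe_product, Set.mem_prod, Finset.coe_Icc, Set.mem_Icc] at hp hq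
      obtain ⟨rfl, rfl⟩ := bundleEdge_inj hs hx hp.2.1 hp.2.2 hq.2.1 hq.2.2 h
      rfl
  have hAb : ∀ e ∈ A, BoundaryEdge N e := by
    intro e he
    obtain ⟨i, hi, rfl⟩ := Finset.mem_image.1 he
    rw [Finset.mem_range] at hi
    simp only [b]
    split_ifs
    · exact Or.inl ⟨i, by omega, rfl⟩
    · exact Or.inr ⟨by omega, rfl⟩
  have hBb : ∀ e ∈ B, ∃ p k, 1 ≤ k ∧ k ≤ β ∧ e = bundleEdge (x p) (L p) k := by
    intro e he
    obtain ⟨⟨p, k⟩, hp, rfl⟩ := Finset.mem_image.1 he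
    simp only [Finset.mem_product, Finset.mem_Icc] at hp
    exact ⟨p, k, hp.2.1, hp.2.2, rfl⟩
  have hd : Disjoint A B := by
    rw [Finset.disjoint_left]
    intro e hA' hB'
    obtain ⟨p, k, h1, h2, rfl⟩ := hBb e hB'
    exact bundleEdge_not_boundary hs hx h1 h2 (hAb _ hA')
  have hcard : (A ∪ B).card = N + β * Fintype.card ι := by
    rw [Finset.card_union_of_disjoint hd, hA, hB]
  have hsub : (↑(A ∪ B) : Set (Finset ℕ)) ⊆ frame N β L x := by
    intro e he
    rw [Finset.coe_union] at he
    rcases he with he | he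
    · exact Or.inl (hAb e he)
    · exact Or.inr (hBb e he)
  have hle := Set.ncard_le_ncard hsub hfin
  rwa [Set.ncard_coe_finset, hcard] at hle

theorem ncard_diff_frame (hs : Slots N n β L) (hx : Good N β L x) {T : Set (Finset ℕ)}
    (hT : IsTriangulation N T) (hF : frame N β L x ⊆ T) :
    (T \ frame N β L x).ncard ≤ n - 3 := by
  have h1 := frame_ncard hs hx (hT.finite.subset hF)
  have h2 := hT.ncard_le (by have := hs.le; omega)
  have h3 := Set.ncard_sdiff_add_ncard_of_subset hF hT.finite
  have h4 := hs.card
  omega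

/-- Triangulations with the same frame are joined by at most `2 * (n - 3)` flips, a bound that does
not depend on `β`. -/
theorem flipPath_of_frame (hs : Slots N n β L) (hx : Good N β L x) {T T' : Set (Finset ℕ)}
    (hT : IsTriangulation N T) (hF : frame N β L x ⊆ T)
    (hT' : IsTriangulation N T') (hF' : frame N β L x ⊆ T') :
    FlipPath N T T' (2 * (n - 3)) :=
  (hT.flipPath_of_common hT' hF hF').mono (by
    have h1 := ncard_diff_frame hs hx hT hF
    have h2 := ncard_diff_frame hs hx hT' hF'
    omega)

/-- The bundles of different slots do not cross for the apex assignment `x`. -/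
def Compat {ι : Type*} (β : ℕ) (L x : ι → ℕ) : Prop :=
  ∀ p q, p ≠ q → ∀ k j, 1 ≤ k → k ≤ β → 1 ≤ j → j ≤ β →
    ¬ Crosses (bundleEdge (x p) (L p) k) (bundleEdge (x q) (L q) j)

theorem frame_isChord (hs : Slots N n β L) (hx : Good N β L x) :
    ∀ e ∈ frame N β L x, IsChord N e := by
  rintro e (he | ⟨p, k, h1, h2, rfl⟩)
  · exact BoundaryEdge.isChord he hs.le
  · obtain ⟨a, b, hab, ha, hb, h, -⟩ := bundleEdge_exists hs hx p h1 h2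
    rw [h, isChord_pair]; exact ⟨hab, ha, hb⟩

theorem frame_noncrossing (hs : Slots N n β L) (hx : Good N β L x) (hc : Compat β L x) :
    ∀ e ∈ frame N β L x, ∀ f ∈ frame N β L x, ¬ Crosses e f := by
  have hbd : ∀ e, BoundaryEdge N e → ∀ f ∈ frame N β L x, ¬ Crosses e f := by
    intro e he f hf
    obtain ⟨a, b, hab, hb, rfl⟩ := (frame_isChord hs hx f hf).exists_pair
    exact he.not_cr (by omega) hb
  rintro e (he | ⟨p, k, h1, h2, rfl⟩) f hf
  · exact hbd e he f hf
  rcases hf with hf | ⟨q, j, h3, h4, rfl⟩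
  · exact fun h => hbd f hf _ (Or.inr ⟨p, k, h1, h2, rfl⟩) h.symm
  · by_cases hpq : p = q
    · subst hpq
      rcases bundleEdge_cases hx p k with ⟨h, h'⟩ | ⟨h, h'⟩ <;>
      rcases bundleEdge_cases hx p j with ⟨h5, h5'⟩ | ⟨h5, h5'⟩ <;>
      rw [h', h5', crosses_iff] <;> first | omega | exact fun h6 => h6.ne.2.1 rfl
    · exact hc p q hpq k j h1 h2 h3 h4

/-- A chord with no end strictly inside the slot from `l` to `r` that crosses neither
`{u, l + 1}` nor `{v, l + 1}` crosses none of `{u, v}`, `{v, r}`, `{u, l}`, `{u, r}`. -/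
theorem side_not_cr {l r u v c d a b : ℕ} (hlr : l + 1 < r)
    (hc : c ≤ l ∨ r ≤ c) (hd : d ≤ l ∨ r ≤ d)
    (h1 : ¬ Cr c d u (l + 1)) (h2 : ¬ Cr c d v (l + 1))
    (hcase : (a = u ∧ b = v) ∨ (a = v ∧ b = r) ∨ (a = u ∧ b = l) ∨ (a = u ∧ b = r)) :
    ¬ Cr c d a b := by
  rcases hcase with ⟨rfl, rfl⟩ | ⟨rfl, rfl⟩ | ⟨rfl, rfl⟩ | ⟨rfl, rfl⟩ <;>
  · unfold Cr at *; grind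

/-- If the compatible assignments `x` and `y` differ only at `p`, and the apexes there are fan
apexes oriented as in `IsTriangulation.shift`, then some triangulation with frame `x` is `β + 1`
flips away from one with frame `y`. The starting triangulation contains, besides the frame, the
sides of the region swept by the fan. -/
theorem exists_shift (hs : Slots N n β L) (hx : Good N β L x) (hy : Good N β L y)
    (hcx : Compat β L x) (hcy : Compat β L y) (p : ι) (hxy : ∀ q, q ≠ p → x q = y q)
    (hxp : x p ≠ L p) (hyp : y p ≠ L p)
    (hor : (L p + β + 1 < y p ∧ y p < x p) ∨ (x p < L p ∧ L p + β + 1 < y p) ∨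
      (y p < x p ∧ x p < L p)) :
    ∃ M C, IsTriangulation N M ∧ IsTriangulation N C ∧ frame N β L x ⊆ M ∧
      frame N β L y ⊆ C ∧ FlipPath N M C (β + 1) := by
  have hN := hs.le
  have hβ := hs.pos
  have hLp := hs.lt p
  obtain ⟨huN, huR, hu⟩ := hx p
  obtain ⟨hvN, hvR, hv⟩ := hy p
  have hup := hu p
  have hvp := hv p
  have hux : ∀ k, bundleEdge (x p) (L p) k = {x p, L p + k} := fun k => by simp [bundleEdge, hxp]
  have hvx : ∀ k, bundleEdge (y p) (L p) k = {y p, L p + k} := fun k => by simp [bundleEdge, hyp]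
  let Sd : Set (Finset ℕ) :=
    {{x p, y p}, {y p, L p + β + 1}, {x p, L p}, {x p, L p + β + 1}}
  have hSd : ∀ e ∈ Sd, ∃ a b, a < N ∧ b < N ∧ a ≠ b ∧ e = {a, b} ∧
      ((a = x p ∧ b = y p) ∨ (a = y p ∧ b = L p + β + 1) ∨ (a = x p ∧ b = L p) ∨
        (a = x p ∧ b = L p + β + 1)) := by
    rintro e (rfl | rfl | rfl | rfl)
    · exact ⟨_, _, by omega, by omega, by omega, rfl, by simp⟩
    · exact ⟨_, _, by omega, by omega, by omega, rfl, by simp⟩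
    · exact ⟨_, _, by omega, by omega, by omega, rfl, by simp⟩
    · exact ⟨_, _, by omega, by omega, by omega, rfl, by simp⟩
  -- the sides of the region swept by the fan cross no edge of the frame
  have hFS : ∀ e ∈ frame N β L x, ∀ f ∈ Sd, ¬ Crosses e f := by
    intro e he f hf
    obtain ⟨a, b, ha, hb, hab, rfl, hcase⟩ := hSd f hf
    rcases he with he | ⟨q, k, hk1, hk2, rfl⟩
    · exact BoundaryEdge.not_cr he ha hb
    by_cases hq : q = p
    · subst hq
      rw [hux, crosses_iff]
      clear hSd hcx hcy hux hvx hu hv hxy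
      unfold Cr; grind
    · have h1 := hcx q p hq k 1 hk1 hk2 le_rfl hβ
      have h2 := hcy q p hq k 1 hk1 hk2 le_rfl hβ
      obtain ⟨c, d, hcd, hc, hd, heq, hout⟩ := bundleEdge_exists hs hx q hk1 hk2
      have hout := hout p (Ne.symm hq)
      rw [hux, heq, crosses_iff] at h1
      rw [hvx, ← hxy q hq, heq, crosses_iff] at h2
      rw [heq, crosses_iff]
      exact side_not_cr (by omega) hout.1 hout.2 h1 h2 hcase
  have hSS : ∀ e ∈ Sd, ∀ f ∈ Sd, ¬ Crosses e f := by
    intro e he f hf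
    obtain ⟨a, b, ha, hb, hab, rfl, hcase⟩ := hSd e he
    obtain ⟨c, d, hc, hd, hcd, rfl, hcase'⟩ := hSd f hf
    rw [crosses_iff]
    clear hFS hSd hcx hcy hux hvx hu hv hxy
    unfold Cr; grind
  obtain ⟨M, hM, hFM⟩ := exists_isTriangulation (N := N) (F := frame N β L x ∪ Sd)
    (by
      rintro e (he | he)
      · exact frame_isChord hs hx e he
      · obtain ⟨a, b, ha, hb, hab, rfl, -⟩ := hSd e he
        exact isChord_pair.2 ⟨hab, ha, hb⟩)
    (fun e he => Or.inl (Or.inl he))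
    (by
      rintro e (he | he) f (hf | hf)
      · exact frame_noncrossing hs hx hcx e he f hf
      · exact hFS e he f hf
      · exact fun h => hFS f hf e he h.symm
      · exact hSS e he f hf)
  have hfan : ∀ k ≤ β + 1, ({x p, L p + k} : Finset ℕ) ∈ M := by
    intro k hk
    rcases Nat.eq_zero_or_pos k with rfl | hk0
    · exact hFM (Or.inr (by simp [Sd]))
    rcases hk.lt_or_eq with hk' | rfl
    · exact hFM (Or.inl (Or.inr ⟨p, k, hk0, by omega, (hux k).symm⟩))
    · exact hFM (Or.inr (by simp [Sd, add_assoc]))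
  obtain ⟨C, hC, hp, hkeep, hnew⟩ := hM.shift hLp hor hfan (hFM (Or.inr (by simp [Sd])))
    (hFM (Or.inr (by simp [Sd])))
  refine ⟨M, C, hM, hC, fun e he => hFM (Or.inl he), ?_, hp⟩
  rintro e (he | ⟨q, k, hk1, hk2, rfl⟩)
  · exact hC.2.1 e he
  by_cases hq : q = p
  · subst hq; rw [hvx]; exact hnew k hk2
  · rw [← hxy q hq]
    refine hkeep _ (hFM (Or.inl (Or.inr ⟨q, k, hk1, hk2, rfl⟩))) fun j hj1 hj2 heq => ?_
    have h1 := hs.sep p q (Ne.symm hq)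
    have h2 := hu q
    have h3 := hv q
    have h4 := (hx q).2.2 p
    rcases bundleEdge_cases hx q k with ⟨h5, h5'⟩ | ⟨h5, h5'⟩
    · rw [h5', pair_eq_iff] at heq
      omega
    · rw [h5', pair_eq_iff] at heq
      omega

/-- From any triangulation with frame `x` to some triangulation with frame `y`, when `x` and `y`
differ only in the fan apex at `p`: rearrange the edges outside the frame and move the fan. In one
of the two orientations the fan moves backwards, from `y` to `x`. -/
theorem exists_step (hs : Slots N n β L) (hx : Good N β L x) (hy : Good N β L y)
    (hcx : Compat β L x) (hcy : Compat β L y) (p : ι) (hxy : ∀ q, q ≠ p → x q = y q)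
    (hxp : x p ≠ L p) (hyp : y p ≠ L p) {T : Set (Finset ℕ)} (hT : IsTriangulation N T)
    (hF : frame N β L x ⊆ T) :
    ∃ T', IsTriangulation N T' ∧ frame N β L y ⊆ T' ∧
      FlipPath N T T' (2 * (n - 3) + (β + 1)) := by
  obtain ⟨huN, huR, hu⟩ := hx p
  obtain ⟨hvN, hvR, hv⟩ := hy p
  have hu := hu p
  have hv := hv p
  rcases eq_or_ne (x p) (y p) with heq | hne
  · have : x = y := by
      funext q
      by_cases hq : q = p
      · rw [hq, heq]
      · exact hxy q hq
    subst this
    exact ⟨T, hT, hF, .refl _ _⟩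
  by_cases hor : (L p + β + 1 < y p ∧ y p < x p) ∨ (x p < L p ∧ L p + β + 1 < y p) ∨
      (y p < x p ∧ x p < L p)
  · obtain ⟨M, C, hM, hC, hFM, hFC, hp⟩ := exists_shift hs hx hy hcx hcy p hxy hxp hyp hor
    exact ⟨C, hC, hFC, (flipPath_of_frame hs hx hT hF hM hFM).trans hp⟩
  · obtain ⟨M, C, hM, hC, hFM, hFC, hp⟩ := exists_shift hs hy hx hcy hcx p
      (fun q hq => (hxy q hq).symm) hyp hxp (by omega)
    exact ⟨M, hM, hFM, (flipPath_of_frame hs hx hT hF hC hFC).trans hp.symm⟩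

/-- The fans over the slots in `P` are collapsed with `β` flips each; the other fans survive. -/
theorem exists_collapse (hs : Slots N n β L) (hx : Good N β L x) (hxL : ∀ p, x p ≠ L p)
    {T : Set (Finset ℕ)} (hT : IsTriangulation N T)
    (hfan : ∀ p, ∀ k ≤ β + 1, ({x p, L p + k} : Finset ℕ) ∈ T) (P : Finset ι) :
    ∃ C, IsTriangulation N C ∧ FlipPath N T C (β * P.card) ∧
      (∀ p ∉ P, ∀ k ≤ β + 1, ({x p, L p + k} : Finset ℕ) ∈ C) ∧
      ∀ p ∈ P, ∀ k, 1 ≤ k → k ≤ β → ({L p, L p + k + 1} : Finset ℕ) ∈ C := by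
  classical
  induction P using Finset.induction_on with
  | empty => exact ⟨T, hT, .refl _ _, fun p _ => hfan p, by simp⟩
  | insert p P hp ih =>
    obtain ⟨C, hC, hpath, hfans, hpock⟩ := ih
    have hxp := hx p
    have hxpp := hxp.2.2 p
    have hxpL := hxL p
    obtain ⟨D, hD, hpath', hkeep, hnew⟩ := hC.collapse (hs.lt p) (u := x p) (by omega) (hfans p hp)
    refine ⟨D, hD, (hpath.trans hpath').mono ?_, fun q hq k hk => ?_, fun q hq k hk1 hk2 => ?_⟩
    · rw [Finset.card_insert_of_notMem hp]; exact le_of_eq (by ring)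
    · rw [Finset.mem_insert, not_or] at hq
      refine hkeep _ (hfans q hq.2 k hk) fun j hj1 hj2 heq => ?_
      have h1 := hs.sep p q (Ne.symm hq.1)
      have h2 := (hx q).2.2 p
      rw [pair_eq_iff] at heq
      omega
    · rcases Finset.mem_insert.1 hq with rfl | hq
      · exact hnew k hk1 hk2
      · refine hkeep _ (hpock q hq k hk1 hk2) fun j hj1 hj2 heq => ?_
        have h1 := hs.sep p q (fun h => hp (h ▸ hq))
        rw [pair_eq_iff] at heq
        omega

/-- The flip path for an acyclic set `S` of slots. All fans outside `S` are collapsed, the fans over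
`S` are moved from `u` to `u'` one at a time, and the fans outside `S` are opened again. The
relation `E p q` stands for a conflict between the fan of `p` in `T` and the fan of `q` in `T'`;
`hS` says that every nonempty subset of `S` has a source. A source is moved first, since the
fan of no remaining slot crosses its new position. -/
theorem flipPath_core (hs : Slots N n β L) {u u' : ι → ℕ}
    (hu : Good N β L u) (huL : ∀ p, u p ≠ L p) (hu' : Good N β L u') (huL' : ∀ p, u' p ≠ L p)
    {T T' : Set (Finset ℕ)} (hT : IsTriangulation N T) (hT' : IsTriangulation N T')
    (hfan : ∀ p, ∀ k ≤ β + 1, ({u p, L p + k} : Finset ℕ) ∈ T)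
    (hfan' : ∀ p, ∀ k ≤ β + 1, ({u' p, L p + k} : Finset ℕ) ∈ T')
    (S : Finset ι) (E : ι → ι → Prop)
    (hE : ∀ p q, p ≠ q → ∀ k j, 1 ≤ k → k ≤ β → 1 ≤ j → j ≤ β →
      Crosses {u p, L p + k} {u' q, L q + j} → E p q)
    (hS : ∀ R ⊆ S, R.Nonempty → ∃ p ∈ R, ∀ q ∈ R, ¬ E q p) :
    FlipPath N T T' (2 * (β * (Fintype.card ι - S.card)) +
      S.card * (2 * (n - 3) + (β + 1)) + 2 * (n - 3)) := by
  classical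
  -- `x D` is the assignment in which the fans over `D` have been moved, the other fans over `S`
  -- are in their original place, and the bundles outside `S` are collapsed
  let x : Finset ι → ι → ℕ := fun D p => if p ∈ S then if p ∈ D then u' p else u p else L p
  have hx1 : ∀ D p, p ∈ S → p ∈ D → x D p = u' p := fun D p h1 h2 => by simp [x, h1, h2]
  have hx2 : ∀ D p, p ∈ S → p ∉ D → x D p = u p := fun D p h1 h2 => by simp [x, h1, h2]
  have hx3 : ∀ D p, p ∉ S → x D p = L p := fun D p h1 => by simp [x, h1]
  have hu1 : ∀ p k, bundleEdge (u p) (L p) k = {u p, L p + k} := fun p k => by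
    simp [bundleEdge, huL p]
  have hu2 : ∀ p k, bundleEdge (u' p) (L p) k = {u' p, L p + k} := fun p k => by
    simp [bundleEdge, huL' p]
  have hgood : ∀ D, Good N β L (x D) := by
    intro D p
    by_cases h1 : p ∈ S
    · by_cases h2 : p ∈ D
      · rw [hx1 D p h1 h2]; exact hu' p
      · rw [hx2 D p h1 h2]; exact hu p
    · rw [hx3 D p h1]
      have := hs.lt p
      refine ⟨by omega, by omega, fun q => ?_⟩
      by_cases hpq : p = q
      · subst hpq; exact Or.inl le_rfl
      · have := hs.sep p q hpq; omega
  have hcompat : ∀ D, (∀ q ∈ S, q ∉ D → ∀ p ∈ D, ¬ E q p) → Compat β L (x D) := by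
    intro D hD
    -- a collapsed bundle stays within its slot and crosses no other bundle
    have hpocket : ∀ p q, p ≠ q → p ∉ S → ∀ k j, 1 ≤ k → k ≤ β → 1 ≤ j → j ≤ β →
        ¬ Crosses (bundleEdge (x D p) (L p) k) (bundleEdge (x D q) (L q) j) := by
      intro p q hpq hp k j hk1 hk2 hj1 hj2
      obtain ⟨c, d, -, -, -, heq, hout⟩ := bundleEdge_exists hs (hgood D) q hj1 hj2
      have hout := hout p hpq
      rw [heq, hx3 D p hp, bundleEdge, if_pos rfl, crosses_iff]
      clear heq
      unfold Cr; grind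
    intro p q hpq k j hk1 hk2 hj1 hj2
    by_cases hp : p ∈ S
    swap
    · exact hpocket p q hpq hp k j hk1 hk2 hj1 hj2
    by_cases hq : q ∈ S
    swap
    · exact fun h => hpocket q p (Ne.symm hpq) hq j k hj1 hj2 hk1 hk2 h.symm
    by_cases hpD : p ∈ D <;> by_cases hqD : q ∈ D
    · rw [hx1 D p hp hpD, hx1 D q hq hqD, hu2, hu2]
      exact hT'.2.2.1 _ (hfan' p k (by omega)) _ (hfan' q j (by omega))
    · rw [hx1 D p hp hpD, hx2 D q hq hqD, hu1, hu2]
      exact fun h => hD q hq hqD p hpD (hE q p (Ne.symm hpq) j k hj1 hj2 hk1 hk2 h.symm)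
    · rw [hx2 D p hp hpD, hx1 D q hq hqD, hu1, hu2]
      exact fun h => hD p hp hpD q hqD (hE p q hpq k j hk1 hk2 hj1 hj2 h)
    · rw [hx2 D p hp hpD, hx2 D q hq hqD, hu1, hu1]
      exact hT.2.2.1 _ (hfan p k (by omega)) _ (hfan q j (by omega))
  have hsweep : ∀ m, ∀ D ⊆ S, (S \ D).card = m → (∀ q ∈ S, q ∉ D → ∀ p ∈ D, ¬ E q p) →
      ∀ X, IsTriangulation N X → frame N β L (x D) ⊆ X →
      ∃ Y, IsTriangulation N Y ∧ frame N β L (x S) ⊆ Y ∧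
        FlipPath N X Y (m * (2 * (n - 3) + (β + 1))) := by
    intro m
    induction m with
    | zero =>
      intro D hDS hm _ X hX hF
      have : D = S := Finset.Subset.antisymm hDS
        (Finset.sdiff_eq_empty_iff_subset.1 (Finset.card_eq_zero.1 hm))
      subst this
      exact ⟨X, hX, hF, .refl _ _⟩
    | succ m ih =>
      intro D hDS hm hD X hX hF
      obtain ⟨p, hp, hsrc⟩ := hS (S \ D) Finset.sdiff_subset (Finset.card_pos.1 (by omega))
      have hp' := Finset.mem_sdiff.1 hp
      have hD' : ∀ q ∈ S, q ∉ insert p D → ∀ r ∈ insert p D, ¬ E q r := by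
        intro q hq hqD r hr
        rw [Finset.mem_insert, not_or] at hqD
        rcases Finset.mem_insert.1 hr with rfl | hr
        · exact hsrc q (Finset.mem_sdiff.2 ⟨hq, hqD.2⟩)
        · exact hD q hq hqD.2 r hr
      obtain ⟨Z, hZ, hFZ, hpZ⟩ := exists_step hs (hgood D) (hgood (insert p D)) (hcompat D hD)
        (hcompat _ hD') p
        (fun q hq => by simp [x, Finset.mem_insert, hq])
        (by rw [hx2 D p hp'.1 hp'.2]; exact huL p)
        (by rw [hx1 _ p hp'.1 (Finset.mem_insert_self _ _)]; exact huL' p) hX hF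
      obtain ⟨Y, hY, hFY, hpY⟩ := ih (insert p D) (Finset.insert_subset hp'.1 hDS)
        (by rw [Finset.sdiff_insert, Finset.card_erase_of_mem hp]; omega) hD' Z hZ hFZ
      exact ⟨Y, hY, hFY, (hpZ.trans hpY).mono (le_of_eq (by ring))⟩
  obtain ⟨X, hX, hpX, hXf, hXp⟩ := exists_collapse hs hu huL hT hfan Sᶜ
  obtain ⟨X', hX', hpX', hXf', hXp'⟩ := exists_collapse hs hu' huL' hT' hfan' Sᶜ
  have hFX : frame N β L (x ∅) ⊆ X := by
    rintro e (he | ⟨p, k, hk1, hk2, rfl⟩)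
    · exact hX.2.1 e he
    by_cases hp : p ∈ S
    · rw [hx2 ∅ p hp (by simp), hu1]; exact hXf p (by simpa using hp) k (by omega)
    · rw [hx3 ∅ p hp, bundleEdge, if_pos rfl]; exact hXp p (by simpa using hp) k hk1 hk2
  have hFX' : frame N β L (x S) ⊆ X' := by
    rintro e (he | ⟨p, k, hk1, hk2, rfl⟩)
    · exact hX'.2.1 e he
    by_cases hp : p ∈ S
    · rw [hx1 S p hp hp, hu2]; exact hXf' p (by simpa using hp) k (by omega)
    · rw [hx3 S p hp, bundleEdge, if_pos rfl]; exact hXp' p (by simpa using hp) k hk1 hk2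
  obtain ⟨Y, hY, hFY, hpY⟩ := hsweep S.card ∅ (Finset.empty_subset _) (by simp) (by simp) X hX hFX
  refine (((hpX.trans hpY).trans (flipPath_of_frame hs (hgood S) hY hFY hX' hFX')).trans
    hpX'.symm).mono (le_of_eq ?_)
  rw [Finset.card_compl]
  ring
end

/-! ### The blow-up -/

/-- `flipDist` is `0` when there is no flip sequence at all, and a sequence with at least one flip
joins two triangulations. So a nonzero flip distance already forces both sets of chords to be
triangulations. -/
theorem isTriangulation_of_flipDist_ne_zero {N : ℕ} {T T' : Set (Finset ℕ)}
    (h : flipDist N T T' ≠ 0) : IsTriangulation N T ∧ IsTriangulation N T' := by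
  have hne : {ℓ : ℕ | ∃ g : ℕ → Set (Finset ℕ), IsFlipSeq N T T' ℓ g}.Nonempty := by
    by_contra hne
    rw [Set.not_nonempty_iff_eq_empty] at hne
    exact h (by rw [flipDist, hne, Nat.sInf_empty])
  obtain ⟨g, h0, h1, hg⟩ := Nat.sInf_mem hne
  change g (flipDist N T T') = T' at h1
  change ∀ i, i < flipDist N T T' → _ at hg
  obtain ⟨m, hm⟩ := Nat.exists_eq_succ_of_ne_zero h
  rw [hm] at h1 hg
  exact ⟨h0 ▸ (hg 0 (by omega)).1, h1 ▸ (hg m (by omega)).2.1⟩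

section
variable {n : ℕ} {T T' : Set (Finset ℕ)} {β : ℕ}

theorem gamma_finite : (Gamma n T T').Finite := by
  refine Set.Finite.subset (Finset.finite_toSet
    (Finset.range n ×ˢ Finset.range n ×ˢ Finset.range n)) ?_
  rintro ⟨a, u, u'⟩ ⟨h1, h2, h3, -⟩
  simp only [Finset.coe_product, Set.mem_prod, Finset.coe_range, Set.mem_Iio] at *
  omega

theorem leftSet_eq : leftSet n T T' = Prod.fst '' Gamma n T T' := by
  ext a
  constructor
  · rintro ⟨u, u', h⟩; exact ⟨_, h, rfl⟩
  · rintro ⟨⟨a, u, u'⟩, h, rfl⟩; exact ⟨u, u', h⟩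

theorem leftSet_finite : (leftSet n T T').Finite := leftSet_eq ▸ gamma_finite.image _

/-- A spine edge lies in only one triangle, as its apex must lie outside the edge. -/
theorem apex_unique (hT : IsTriangulation n T) {a u w : ℕ} (hu : IsTriangle T a (a + 1) u)
    (hw : IsTriangle T a (a + 1) w) : u = w := by
  obtain ⟨-, h1, h2, -, h3, h4⟩ := hu
  obtain ⟨-, k1, k2, -, k3, k4⟩ := hw
  have e1 := hT.not_cr h3 k4
  have e2 := hT.not_cr h4 k3
  unfold Cr at e1 e2
  omega

/-- A pair of triangles is determined by its spine edge. -/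
theorem gamma_injOn (hT : IsTriangulation n T) (hT' : IsTriangulation n T') :
    Set.InjOn Prod.fst (Gamma n T T') := by
  rintro ⟨a, u, u'⟩ hp ⟨b, w, w'⟩ hq (rfl : a = b)
  have h1 := apex_unique hT hp.2.2.2.1 hq.2.2.2.1
  have h2 := apex_unique hT' hp.2.2.2.2.1 hq.2.2.2.2.1
  simp only at h1 h2
  rw [h1, h2]

theorem gamma_ncard_lt (hn : 3 ≤ n) (hT : IsTriangulation n T) (hT' : IsTriangulation n T') :
    (Gamma n T T').ncard + 1 ≤ n := by
  have h : (Gamma n T T').ncard ≤ (Finset.range (n - 1) : Set ℕ).ncard := by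
    refine Set.ncard_le_ncard_of_injOn Prod.fst ?_ (gamma_injOn hT hT') (Finset.finite_toSet _)
    rintro ⟨a, u, u'⟩ hp
    have h1 := hp.1
    simp only [Finset.coe_range, Set.mem_Iio] at *
    omega
  rw [Set.ncard_coe_finset, Finset.card_range] at h
  omega

theorem emb_mono {i j : ℕ} (h : i ≤ j) : emb n T T' β i + (j - i) ≤ emb n T T' β j := by
  have h1 : ({a ∈ leftSet n T T' | a < i}).ncard ≤ ({a ∈ leftSet n T T' | a < j}).ncard :=
    Set.ncard_le_ncard (fun a ha => ⟨ha.1, by have := ha.2; omega⟩)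
      (leftSet_finite.subset fun a ha => ha.1)
  have h2 := Nat.mul_le_mul_left β h1
  unfold emb
  omega

theorem emb_succ {a : ℕ} (ha : a ∈ leftSet n T T') :
    emb n T T' β (a + 1) = emb n T T' β a + β + 1 := by
  have h : {b ∈ leftSet n T T' | b < a + 1} = insert a {b ∈ leftSet n T T' | b < a} := by
    ext b
    simp only [Set.mem_sep_iff, Set.mem_insert_iff]
    constructor
    · rintro ⟨h1, h2⟩
      by_cases h3 : b = a
      · exact Or.inl h3
      · exact Or.inr ⟨h1, by omega⟩
    · rintro (rfl | ⟨h1, h2⟩)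
      · exact ⟨ha, by omega⟩
      · exact ⟨h1, by omega⟩
  unfold emb
  rw [h, Set.ncard_insert_of_notMem (fun h => lt_irrefl _ h.2)
    (leftSet_finite.subset fun a ha => ha.1)]
  ring

theorem emb_lt {v : ℕ} (hv : v < n) : emb n T T' β v < blowSize n T T' β := by
  have h1 : ({a ∈ leftSet n T T' | a < v}).ncard ≤ (leftSet n T T').ncard :=
    Set.ncard_le_ncard (fun a ha => ha.1) leftSet_finite
  have h2 : (leftSet n T T').ncard ≤ (Gamma n T T').ncard := by
    rw [leftSet_eq]; exact Set.ncard_image_le gamma_finite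
  have h3 := Nat.mul_le_mul_left β (h1.trans h2)
  unfold emb blowSize
  omega

theorem emb_strict {i j : ℕ} (h : i < j) : emb n T T' β i < emb n T T' β j := by
  have := emb_mono (n := n) (T := T) (T' := T') (β := β) h.le
  omega

/-- No vertex of the original polygon is embedded strictly inside the subdivided edge. -/
theorem emb_slot {a : ℕ} (ha : a ∈ leftSet n T T') (v : ℕ) :
    (v ≤ a ∧ emb n T T' β v ≤ emb n T T' β a) ∨
      (a < v ∧ emb n T T' β a + β + 1 ≤ emb n T T' β v) := by
  rcases Nat.lt_or_ge a v with h | h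
  · have h1 := emb_mono (n := n) (T := T) (T' := T') (β := β) (show a + 1 ≤ v from h)
    rw [emb_succ ha] at h1
    exact Or.inr ⟨h, by omega⟩
  · have h1 := emb_mono (n := n) (T := T) (T' := T') (β := β) h
    exact Or.inl ⟨h, by omega⟩

theorem crossQ_of_cr {a b c d : ℕ} (h : Cr a b c d) :
    crossQ ((a : ℚ) / 2) ((b : ℚ) / 2) ((c : ℚ) / 2) ((d : ℚ) / 2) := by
  unfold crossQ
  simp only [lt_min_iff, min_lt_iff, lt_max_iff, max_lt_iff,
    div_lt_div_iff_of_pos_right (two_pos : (0 : ℚ) < 2), Nat.cast_lt]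
  unfold Cr at h
  omega

/-- Comparing a crossing in the blow-up with the crossing expressed through midpoints of spine
edges. Here `U, V, A, B` are the positions of `u, v, a, b` in the blow-up. -/
theorem crossQ_of_blown {u a v b k j U A V B β : ℕ} (hk : 1 ≤ k) (hkβ : k ≤ β) (hj : 1 ≤ j)
    (hjβ : j ≤ β)
    (hub : (u ≤ b ∧ U ≤ B) ∨ (b < u ∧ B + β + 1 ≤ U))
    (hva : (v ≤ a ∧ V ≤ A) ∨ (a < v ∧ A + β + 1 ≤ V))
    (hvb : (v ≤ b ∧ V ≤ B) ∨ (b < v ∧ B + β + 1 ≤ V))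
    (huv : (u < v ∧ U < V) ∨ (u = v ∧ U = V) ∨ (v < u ∧ V < U))
    (hab : (a < b ∧ A + β + 1 ≤ B) ∨ (b < a ∧ B + β + 1 ≤ A))
    (h : Cr U (A + k) V (B + j)) :
    crossQ (u : ℚ) ((a : ℚ) + 1 / 2) (v : ℚ) ((b : ℚ) + 1 / 2) := by
  -- doubling all coordinates makes the midpoints integral
  have h1 : Cr (2 * u) (2 * a + 1) (2 * v) (2 * b + 1) := by
    unfold Cr at *
    grind
  have h2 := crossQ_of_cr h1
  push_cast at h2
  convert h2 using 1 <;> ring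

/-- The supremum in the definition of `acNum` is attained. -/
theorem exists_acyclic : ∃ S ⊆ Gamma n T T',
    ¬ HasDicycleIn (ConflictEdge n T T') S ∧ S.ncard = acNum n T T' := by
  have h := Nat.sSup_mem (s := {m : ℕ | ∃ S : Set (ℕ × ℕ × ℕ), S ⊆ Gamma n T T' ∧
    ¬ HasDicycleIn (ConflictEdge n T T') S ∧ S.ncard = m})
    ⟨0, ∅, Set.empty_subset _, ?_, Set.ncard_empty _⟩ ⟨(Gamma n T T').ncard, ?_⟩
  · exact h
  · rintro ⟨k, f, -, hf, -⟩
    exact hf 0 (Nat.zero_le _)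
  · rintro m ⟨S, hS, -, rfl⟩
    exact Set.ncard_le_ncard hS gamma_finite

/-- A nonempty finite subset of a set without directed cycles has a source: otherwise following
predecessors would eventually repeat a vertex. -/
theorem exists_source {α : Type*} {E : α → α → Prop} {S : Set α} (hS : ¬ HasDicycleIn E S)
    (R : Finset α) (hR : ↑R ⊆ S) (hne : R.Nonempty) : ∃ p ∈ R, ∀ q ∈ R, ¬ E q p := by
  by_contra! hcon
  obtain ⟨p₀, hp₀⟩ := hne
  choose! pr hpr hE using hcon
  have hmem : ∀ i, pr^[i] p₀ ∈ R := by
    intro i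
    induction i with
    | zero => exact hp₀
    | succ i ih => rw [Function.iterate_succ_apply']; exact hpr _ ih
  have hedge : ∀ i, E (pr^[i + 1] p₀) (pr^[i] p₀) := by
    intro i
    rw [Function.iterate_succ_apply']
    exact hE _ (hmem i)
  obtain ⟨i, j, hlt, heq⟩ : ∃ i j, i < j ∧ pr^[i] p₀ = pr^[j] p₀ := by
    obtain ⟨i, j, hij, heq⟩ := Finite.exists_ne_map_eq_of_infinite
      (fun i => (⟨pr^[i] p₀, hmem i⟩ : R))
    have heq : pr^[i] p₀ = pr^[j] p₀ := congrArg Subtype.val heq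
    rcases Nat.lt_or_gt_of_ne hij with h | h
    · exact ⟨i, j, h, heq⟩
    · exact ⟨j, i, h, heq.symm⟩
  refine hS ⟨j - i, fun t => pr^[j - t] p₀, by omega, fun t _ => hR (hmem _), fun t ht => ?_, ?_⟩
  · have h := hedge (j - (t + 1))
    rwa [show j - (t + 1) + 1 = j - t by omega] at h
  · change pr^[j - (j - i)] p₀ = pr^[j] p₀
    rw [show j - (j - i) = i by omega, heq]

/-- The two edges at the apex of a triangle with exactly one spine edge `{a, a + 1}` are not on the
spine, so they survive in the blow-up. -/
theorem not_spine {u a : ℕ} (h0 : u ≠ a) (h1 : u ≠ a + 1) (h2 : u + 1 ≠ a) (h3 : u ≠ a + 2)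
    (b : ℕ) :
    ({u, a} : Finset ℕ) ≠ {b, b + 1} ∧ ({u, a + 1} : Finset ℕ) ≠ {b, b + 1} := by
  constructor <;> rw [Ne, pair_eq_iff] <;> omega

/-- The blow-up contains the whole fan over a subdivided edge, including the two edges from the
apex to the ends of that edge, which come from edges of `T`. -/
theorem blowT_fan {p : ℕ × ℕ × ℕ} (hp : p ∈ Gamma n T T') {k : ℕ} (hk : k ≤ β + 1) :
    ({emb n T T' β p.2.1, emb n T T' β p.1 + k} : Finset ℕ) ∈ blowT n T T' β := by
  have ha : p.1 ∈ leftSet n T T' := ⟨p.2.1, p.2.2, hp⟩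
  obtain ⟨-, -, -, ⟨-, h1, h2, -, h3, h4⟩, -, h5, h6, -⟩ := id hp
  have hns := not_spine h2.symm h1.symm h5 h6
  rcases Nat.eq_zero_or_pos k with rfl | hk0
  · refine Or.inl (Or.inl ⟨p.2.1, p.1, by rwa [Finset.pair_comm], ?_, rfl⟩)
    rintro ⟨b, -, h⟩; exact (hns b).1 h
  rcases Nat.lt_or_ge k (β + 1) with hkβ | hkβ
  · exact Or.inr (Set.mem_biUnion hp ⟨k, hk0, by omega, rfl⟩)
  · refine Or.inl (Or.inl ⟨p.2.1, p.1 + 1, by rwa [Finset.pair_comm], ?_, ?_⟩)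
    · rintro ⟨b, -, h⟩; exact (hns b).2 h
    · rw [emb_succ ha, show k = β + 1 by omega, add_assoc]

theorem blowT'_fan {p : ℕ × ℕ × ℕ} (hp : p ∈ Gamma n T T') {k : ℕ} (hk : k ≤ β + 1) :
    ({emb n T T' β p.2.2, emb n T T' β p.1 + k} : Finset ℕ) ∈ blowT' n T T' β := by
  have ha : p.1 ∈ leftSet n T T' := ⟨p.2.1, p.2.2, hp⟩
  obtain ⟨-, -, -, -, ⟨-, h1, h2, -, h3, h4⟩, -, -, h5, h6⟩ := id hp
  have hns := not_spine h2.symm h1.symm h5 h6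
  rcases Nat.eq_zero_or_pos k with rfl | hk0
  · refine Or.inl (Or.inl ⟨p.2.2, p.1, by rwa [Finset.pair_comm], ?_, rfl⟩)
    rintro ⟨b, -, h⟩; exact (hns b).1 h
  rcases Nat.lt_or_ge k (β + 1) with hkβ | hkβ
  · exact Or.inr (Set.mem_biUnion hp ⟨k, hk0, by omega, rfl⟩)
  · refine Or.inl (Or.inl ⟨p.2.2, p.1 + 1, by rwa [Finset.pair_comm], ?_, ?_⟩)
    · rintro ⟨b, -, h⟩; exact (hns b).2 h
    · rw [emb_succ ha, show k = β + 1 by omega, add_assoc]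

theorem good_apex [Fintype (Gamma n T T')] (f : ℕ × ℕ × ℕ → ℕ)
    (hf : ∀ p ∈ Gamma n T T', f p < n ∧ f p ≠ p.1 ∧ f p ≠ p.1 + 1) :
    Good (blowSize n T T' β) β (fun p : Gamma n T T' => emb n T T' β p.1.1)
      (fun p => emb n T T' β (f p.1)) ∧
    ∀ p : Gamma n T T', emb n T T' β (f p.1) ≠ emb n T T' β p.1.1 := by
  have hinj : ∀ i j, i ≠ j → emb n T T' β i ≠ emb n T T' β j := by
    intro i j hij
    rcases Nat.lt_or_gt_of_ne hij with h | h
    · exact (emb_strict h).ne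
    · exact (emb_strict h).ne'
  have hmem : ∀ p : Gamma n T T', p.1.1 ∈ leftSet n T T' := fun p => ⟨p.1.2.1, p.1.2.2, p.2⟩
  refine ⟨fun p => ⟨emb_lt (hf p.1 p.2).1, ?_, fun q => ?_⟩, fun p => hinj _ _ (hf p.1 p.2).2.1⟩
  · have h := hinj _ _ (hf p.1 p.2).2.2
    rwa [emb_succ (hmem p)] at h
  · rcases emb_slot (β := β) (hmem q) (f p.1) with h | h
    · exact Or.inl h.2
    · exact Or.inr h.2

theorem gamma_slots [Fintype (Gamma n T T')] (hn : 3 ≤ n) (hT : IsTriangulation n T)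
    (hT' : IsTriangulation n T') (hβ : 1 ≤ β) :
    Slots (blowSize n T T' β) n β (fun p : Gamma n T T' => emb n T T' β p.1.1) := by
  have hmem : ∀ p : Gamma n T T', p.1.1 ∈ leftSet n T T' := fun p => ⟨p.1.2.1, p.1.2.2, p.2⟩
  refine ⟨?_, hn, hβ, fun p => ?_, fun p => ?_, fun p q hpq => ?_⟩
  · rw [blowSize, Set.ncard_eq_toFinset_card', Set.toFinset_card]
  · have h := emb_lt (n := n) (T := T) (T' := T') (β := β) (show p.1.1 + 1 < n from p.2.1)
    rwa [emb_succ (hmem p)] at h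
  · rcases Nat.eq_zero_or_pos p.1.1 with h | h
    · right
      have h1 := emb_lt (n := n) (T := T) (T' := T') (β := β) (show p.1.1 + 2 < n by omega)
      have h2 := emb_strict (n := n) (T := T) (T' := T') (β := β)
        (show p.1.1 + 1 < p.1.1 + 2 by omega)
      rw [emb_succ (hmem p)] at h2
      omega
    · left
      have h1 := emb_strict (n := n) (T := T) (T' := T') (β := β) h
      omega
  · have hne : p.1.1 ≠ q.1.1 := fun h => hpq (Subtype.ext (gamma_injOn hT hT' p.2 q.2 h))
    have h1 := emb_slot (β := β) (hmem p) q.1.1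
    have h2 := emb_slot (β := β) (hmem q) p.1.1
    omega

theorem conflict_of_crosses (hT : IsTriangulation n T) (hT' : IsTriangulation n T')
    {p q : ℕ × ℕ × ℕ} (hp : p ∈ Gamma n T T') (hq : q ∈ Gamma n T T') (hpq : p ≠ q) {k j : ℕ}
    (hk : 1 ≤ k) (hkβ : k ≤ β) (hj : 1 ≤ j) (hjβ : j ≤ β)
    (h : Crosses {emb n T T' β p.2.1, emb n T T' β p.1 + k}
      {emb n T T' β q.2.2, emb n T T' β q.1 + j}) : ConflictEdge n T T' p q := by
  have hpl : p.1 ∈ leftSet n T T' := ⟨p.2.1, p.2.2, hp⟩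
  have hql : q.1 ∈ leftSet n T T' := ⟨q.2.1, q.2.2, hq⟩
  have hne : p.1 ≠ q.1 := fun h => hpq (gamma_injOn hT hT' hp hq h)
  refine ⟨hp, hq, hpq, crossQ_of_blown hk hkβ hj hjβ (emb_slot hql _)
    (emb_slot hpl _) (emb_slot hql _) ?_ ?_ (crosses_iff.1 h)⟩
  · rcases lt_trichotomy p.2.1 q.2.2 with h | h | h
    · exact Or.inl ⟨h, emb_strict h⟩
    · exact Or.inr (Or.inl ⟨h, by rw [h]⟩)
    · exact Or.inr (Or.inr ⟨h, emb_strict h⟩)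
  · have h1 := emb_slot (β := β) hpl q.1
    have h2 := emb_slot (β := β) hql p.1
    omega

end

/-- Conflict-graph based upper bound: the flip distance between
the β-blow-ups `βT` and `βT'` is at most `β(2|Γ| − ac(H)) + n(2n − 5)`. -/
theorem flip_distance_upper_bound
    (n : ℕ) (hn : 3 ≤ n) (T T' : Set (Finset ℕ))
    (hT : IsTriangulation n T) (hT' : IsTriangulation n T')
    (β : ℕ) (hβ : 1 ≤ β) :
    (flipDist (blowSize n T T' β) (blowT n T T' β) (blowT' n T T' β) : ℤ) ≤
      (β : ℤ) * (2 * ((Gamma n T T').ncard : ℤ) - (acNum n T T' : ℤ)) +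
        (n : ℤ) * (2 * (n : ℤ) - 5) := by
  classical
  obtain ⟨S, hSΓ, hacyc, hScard⟩ := exists_acyclic (n := n) (T := T) (T' := T')
  have hsg : acNum n T T' ≤ (Gamma n T T').ncard :=
    hScard ▸ Set.ncard_le_ncard hSΓ gamma_finite
  have hgn := gamma_ncard_lt hn hT hT'
  have hsum : flipDist (blowSize n T T' β) (blowT n T T' β) (blowT' n T T' β) ≤
      2 * (β * ((Gamma n T T').ncard - acNum n T T')) +
        acNum n T T' * (2 * (n - 3) + (β + 1)) + 2 * (n - 3) := by
    -- at distance `0` (possibly as a junk value) the bound is trivial; otherwise both blow-ups are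
    -- triangulations
    by_cases h0 : flipDist (blowSize n T T' β) (blowT n T T' β) (blowT' n T T' β) = 0
    · rw [h0]; exact Nat.zero_le _
    obtain ⟨hB, hB'⟩ := isTriangulation_of_flipDist_ne_zero h0
    have : Fintype (Gamma n T T') := gamma_finite.fintype
    have hg : Fintype.card (Gamma n T T') = (Gamma n T T').ncard := by
      rw [Set.ncard_eq_toFinset_card', Set.toFinset_card]
    obtain ⟨hu, huL⟩ := good_apex (n := n) (T := T) (T' := T') (β := β) (fun p => p.2.1)
      (fun p hp => ⟨hp.2.1, hp.2.2.2.1.2.2.1.symm, hp.2.2.2.1.2.1.symm⟩)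
    obtain ⟨hu', huL'⟩ := good_apex (n := n) (T := T) (T' := T') (β := β) (fun p => p.2.2)
      (fun p hp => ⟨hp.2.2.1, hp.2.2.2.2.1.2.2.1.symm, hp.2.2.2.2.1.2.1.symm⟩)
    let S₁ : Finset (Gamma n T T') := Finset.univ.filter fun p => p.1 ∈ S
    have hS₁ : S₁.card = acNum n T T' := by
      rw [← hScard, ← Finset.card_map (Function.Embedding.subtype _), ← Set.ncard_coe_finset]
      congr 1
      ext p
      simp only [S₁, Finset.coe_map, Set.mem_image, Finset.coe_filter, Finset.mem_univ, true_and,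
        Set.mem_ofPred_eq, Function.Embedding.subtype_apply]
      exact ⟨fun ⟨q, hq, h⟩ => h ▸ hq, fun h => ⟨⟨p, hSΓ h⟩, h, rfl⟩⟩
    have hacyc' : ¬ HasDicycleIn (fun p q : Gamma n T T' => ConflictEdge n T T' p.1 q.1)
        {p | p.1 ∈ S} := by
      rintro ⟨k, f, hk, hf, hE, hkf⟩
      exact hacyc ⟨k, fun i => (f i).1, hk, hf, hE, congrArg Subtype.val hkf⟩
    have hpath := flipPath_core (gamma_slots hn hT hT' hβ) hu huL hu' huL' hB hB'
      (fun p k hk => blowT_fan p.2 hk) (fun p k hk => blowT'_fan p.2 hk) S₁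
      (fun p q => ConflictEdge n T T' p.1 q.1)
      (fun p q hpq k j hk hkβ hj hjβ h => conflict_of_crosses hT hT' p.2 q.2
        (fun h => hpq (Subtype.ext h)) hk hkβ hj hjβ h)
      (fun R hR hne => exists_source hacyc' R
        (fun p hp => (Finset.mem_filter.1 (hR hp)).2) hne)
    rw [hg, hS₁] at hpath
    exact hpath.flipDist_le
  -- with `g = s + r` pairs and `n = m + 3`, the count exceeds `β * (2 * g - s)` by
  -- `s * (2 * n - 5) + 2 * (n - 3)`, and `s ≤ n - 1`
  generalize (flipDist (blowSize n T T' β) (blowT n T T' β) (blowT' n T T' β)) = d at *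
  generalize (Gamma n T T').ncard = g at *
  generalize acNum n T T' = s at *
  obtain ⟨r, rfl⟩ := Nat.exists_eq_add_of_le hsg
  obtain ⟨m, rfl⟩ := Nat.exists_eq_add_of_le hn
  rw [Nat.add_sub_cancel_left, Nat.add_sub_cancel_left] at hsum
  have hs : s ≤ 2 + m := by omega
  zify at hsum hs ⊢
  nlinarith [mul_nonneg (sub_nonneg.2 hs) (show (0 : ℤ) ≤ 2 * m + 1 by positivity)]
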